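/- arXiv:1806.00739 — 2 statements merged into one kernel-verified Lean document; each statement's English description precedes it below -/
import Mathlib

section
/- For any ε ∈ (0,1), any α > 0 and any pair of distributions (P1,P2) on a finite alphabet X with V(P1,P2,α) > 0, there exist a constant C > 0 and an integer n0 such that for all n ≥ n0, | ξ*(n,α,ε|P1,P2) − GJS(P1,P2,α) − sqrt(V(P1,P2,α)/n)·Φ^{-1}(ε) | ≤ C·(log n)/n. -/
open Filter Topology MeasureTheory

namespace Classification

variable {X : Type*} [Fintype X] [DecidableEq X]

/-- `P` is a probability mass function on the finite alphabet `X`. -/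
def IsDist (P : X → ℝ) : Prop := (∀ x, 0 ≤ P x) ∧ ∑ x, P x = 1

/-- `P` has full support. -/
def FullSupport (P : X → ℝ) : Prop := ∀ x, 0 < P x

/-- Empirical distribution (type) of a sequence `x : Fin m → X`. -/
noncomputable def empDist {m : ℕ} (x : Fin m → X) : X → ℝ :=
  fun a => ((Finset.univ.filter fun i => x i = a).card : ℝ) / m

/-- Real-valued KL divergence with the usual `0 · log 0 = 0` convention. -/
noncomputable def klDivR (Q P : X → ℝ) : ℝ := ∑ x, Q x * Real.log (Q x / P x)

open Classical in
/-- Extended-real-valued KL divergence: `⊤` when `Q` is not absolutely continuous w.r.t. `P`. -/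
noncomputable def klDivE (Q P : X → ℝ) : EReal :=
  if ∀ x, P x = 0 → Q x = 0 then ((klDivR Q P : ℝ) : EReal) else ⊤

/-- The mixture `(α P1 + P2) / (1 + α)`. -/
noncomputable def mix (P1 P2 : X → ℝ) (α : ℝ) : X → ℝ :=
  fun x => (α * P1 x + P2 x) / (1 + α)

/-- Generalized Jensen–Shannon divergence
`GJS(P1,P2,α) = α D(P1 ‖ (αP1+P2)/(1+α)) + D(P2 ‖ (αP1+P2)/(1+α))`. -/
noncomputable def GJS (P1 P2 : X → ℝ) (α : ℝ) : ℝ :=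
  α * klDivR P1 (mix P1 P2 α) + klDivR P2 (mix P1 P2 α)

/-- Training sequence length `N = ⌈α n⌉`. -/
noncomputable def trainLen (α : ℝ) (n : ℕ) : ℕ := ⌈α * (n : ℝ)⌉₊

/-- Probability of observing the sequence `x` under i.i.d. sampling from `P`. -/
noncomputable def seqProb (P : X → ℝ) {m : ℕ} (x : Fin m → X) : ℝ := ∏ i, P (x i)

/-- A binary classification test: output `true` means "declare H₂",
`false` means "declare H₁". -/
abbrev BTest (X : Type*) (α : ℝ) (n : ℕ) : Type _ :=
  (Fin (trainLen α n) → X) → (Fin (trainLen α n) → X) → (Fin n → X) → Bool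

/-- Type-I error probability: probability of declaring `H₂` when `Y^n ~ P1` (hypothesis H₁). -/
noncomputable def beta1 {α : ℝ} {n : ℕ} (φ : BTest X α n) (P1 P2 : X → ℝ) : ℝ :=
  ∑ x1 : Fin (trainLen α n) → X, ∑ x2 : Fin (trainLen α n) → X, ∑ y : Fin n → X,
    if φ x1 x2 y = true then seqProb P1 x1 * seqProb P2 x2 * seqProb P1 y else 0

/-- Type-II error probability: probability of declaring `H₁` when `Y^n ~ P2` (hypothesis H₂). -/
noncomputable def beta2 {α : ℝ} {n : ℕ} (φ : BTest X α n) (P1 P2 : X → ℝ) : ℝ :=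
  ∑ x1 : Fin (trainLen α n) → X, ∑ x2 : Fin (trainLen α n) → X, ∑ y : Fin n → X,
    if φ x1 x2 y = false then seqProb P1 x1 * seqProb P2 x2 * seqProb P2 y else 0

open Classical in
/-- Gutman's test with threshold `lam`: declare `H₁` iff `GJS(T̂_{x₁}, T̂_y, α) ≤ lam`. -/
noncomputable def gutman (α lam : ℝ) (n : ℕ) : BTest X α n :=
  fun x1 _ y => if GJS (empDist x1) (empDist y) α ≤ lam then false else true

open Classical in
/-- `- log x` as an extended real, with `⊤` at `x = 0`. -/
noncomputable def negLogE (x : ℝ) : EReal :=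
  if x = 0 then ⊤ else ((-Real.log x : ℝ) : EReal)

/-- Gutman's exponent function
`F(P1,P2,α,lam) = min { α D(Q1‖P1) + D(Q2‖P2) : GJS(Q1,Q2,α) ≤ lam }` (as an inf in `EReal`). -/
noncomputable def Fexp (P1 P2 : X → ℝ) (α lam : ℝ) : EReal :=
  sInf {v : EReal | ∃ Q1 Q2 : X → ℝ, IsDist Q1 ∧ IsDist Q2 ∧ GJS Q1 Q2 α ≤ lam ∧
    v = (α : EReal) * klDivE Q1 P1 + klDivE Q2 P2}

/-- Expectation of `f` under `P`. -/
noncomputable def expect (P : X → ℝ) (f : X → ℝ) : ℝ := ∑ x, P x * f x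

/-- Variance of `f` under `P`. -/
noncomputable def varD (P : X → ℝ) (f : X → ℝ) : ℝ :=
  expect P (fun x => (f x - expect P f) ^ 2)

/-- Information density `ı₁(x) = log((1+α) P1(x) / (α P1(x) + P2(x)))`. -/
noncomputable def iDens1 (P1 P2 : X → ℝ) (α : ℝ) (x : X) : ℝ :=
  Real.log ((1 + α) * P1 x / (α * P1 x + P2 x))

/-- Information density `ı₂(x) = log((1+α) P2(x) / (α P1(x) + P2(x)))`. -/
noncomputable def iDens2 (P1 P2 : X → ℝ) (α : ℝ) (x : X) : ℝ :=
  Real.log ((1 + α) * P2 x / (α * P1 x + P2 x))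

/-- The dispersion `V(P1,P2,α) = α Var_{P1}[ı₁] + Var_{P2}[ı₂]`. -/
noncomputable def disp (P1 P2 : X → ℝ) (α : ℝ) : ℝ :=
  α * varD P1 (iDens1 P1 P2 α) + varD P2 (iDens2 P1 P2 α)

/-- The standard Gaussian cumulative distribution function `Φ`. -/
noncomputable def stdCDF (x : ℝ) : ℝ :=
  (Real.sqrt (2 * Real.pi))⁻¹ * ∫ t in Set.Iic x, Real.exp (-t ^ 2 / 2)

/-- The inverse standard Gaussian cdf `Φ⁻¹`. -/
noncomputable def stdCDFInv (p : ℝ) : ℝ := sInf {x : ℝ | p ≤ stdCDF x}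

/-- The non-asymptotic fundamental limit `λ*(n, α, ε | P1, P2)` for binary classification. -/
noncomputable def lamStar (α : ℝ) (n : ℕ) (ε : ℝ) (P1 P2 : X → ℝ) : ℝ :=
  sSup {lam : ℝ | 0 ≤ lam ∧ ∃ φ : BTest X α n,
    (∀ Q1 Q2 : X → ℝ, IsDist Q1 → IsDist Q2 →
      beta1 φ Q1 Q2 ≤ Real.exp (-((n : ℝ) * lam))) ∧
    beta2 φ P1 P2 ≤ ε}

/-- Rényi divergence of order `γ`. -/
noncomputable def renyi (γ : ℝ) (P1 P2 : X → ℝ) : ℝ :=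
  (1 / (γ - 1)) * Real.log (∑ x, P1 x ^ γ * P2 x ^ (1 - γ))

/-- The fundamental limit `τ*(n, α, ε | φ_n^Gut, P1, P2)` in the dual setting for Gutman's test. -/
noncomputable def tauStarGut (α : ℝ) (n : ℕ) (ε : ℝ) (P1 P2 : X → ℝ) : ℝ :=
  sSup {τ : ℝ | 0 ≤ τ ∧ ∃ lam : ℝ, 0 ≤ lam ∧
    (∀ Q1 Q2 : X → ℝ, IsDist Q1 → IsDist Q2 →
      beta1 (gutman α lam n) Q1 Q2 ≤ ε) ∧
    beta2 (gutman α lam n) P1 P2 ≤ Real.exp (-((n : ℝ) * τ))}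

/-- A two-sample homogeneity test: `true` means "declare H₂" (different distributions). -/
abbrev TTest (X : Type*) (α : ℝ) (n : ℕ) : Type _ :=
  (Fin (trainLen α n) → X) → (Fin n → X) → Bool

/-- False-alarm probability of a two-sample test. -/
noncomputable def betaFA {α : ℝ} {n : ℕ} (φ : TTest X α n) (P1 : X → ℝ) : ℝ :=
  ∑ x : Fin (trainLen α n) → X, ∑ y : Fin n → X,
    if φ x y = true then seqProb P1 x * seqProb P1 y else 0

/-- Miss-detection probability of a two-sample test. -/
noncomputable def betaMD {α : ℝ} {n : ℕ} (φ : TTest X α n) (P1 P2 : X → ℝ) : ℝ :=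
  ∑ x : Fin (trainLen α n) → X, ∑ y : Fin n → X,
    if φ x y = false then seqProb P1 x * seqProb P2 y else 0

/-- The fundamental limit `ξ*(n, α, ε | P1, P2)` for two-sample homogeneity testing. -/
noncomputable def xiStar (α : ℝ) (n : ℕ) (ε : ℝ) (P1 P2 : X → ℝ) : ℝ :=
  sSup {lam : ℝ | 0 ≤ lam ∧ ∃ φ : TTest X α n,
    (∀ Q1 : X → ℝ, IsDist Q1 → betaFA φ Q1 ≤ Real.exp (-((n : ℝ) * lam))) ∧
    betaMD φ P1 P2 ≤ ε}

/-- An M-ary classification test with the rejection option: `some j` means "declare H_j",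
`none` means "reject". -/
abbrev MTest (X : Type*) (M : ℕ) (α : ℝ) (n : ℕ) : Type _ :=
  (Fin M → Fin (trainLen α n) → X) → (Fin n → X) → Option (Fin M)

/-- Type-`j` error probability: probability of declaring some hypothesis other than
`H_j` or rejection, under `H_j`. -/
noncomputable def betaM {M : ℕ} {α : ℝ} {n : ℕ} (ψ : MTest X M α n)
    (P : Fin M → X → ℝ) (j : Fin M) : ℝ :=
  ∑ xs : Fin M → Fin (trainLen α n) → X, ∑ y : Fin n → X,
    if ψ xs y ≠ some j ∧ ψ xs y ≠ none then
      (∏ i, seqProb (P i) (xs i)) * seqProb (P j) y else 0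

/-- Type-`j` rejection probability: probability of rejecting under `H_j`. -/
noncomputable def zetaM {M : ℕ} {α : ℝ} {n : ℕ} (ψ : MTest X M α n)
    (P : Fin M → X → ℝ) (j : Fin M) : ℝ :=
  ∑ xs : Fin M → Fin (trainLen α n) → X, ∑ y : Fin n → X,
    if ψ xs y = none then (∏ i, seqProb (P i) (xs i)) * seqProb (P j) y else 0

/-- The fundamental limit `λ*(n, α, ε | P)` for M-ary classification with rejection. -/
noncomputable def lamStarM (M : ℕ) (α : ℝ) (n : ℕ) (ε : Fin M → ℝ)
    (P : Fin M → X → ℝ) : ℝ :=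
  sSup {lam : ℝ | 0 ≤ lam ∧ ∃ ψ : MTest X M α n,
    (∀ Q : Fin M → X → ℝ, (∀ i, IsDist (Q i)) → ∀ j,
      betaM ψ Q j ≤ Real.exp (-((n : ℝ) * lam))) ∧
    (∀ j, zetaM ψ P j ≤ ε j)}

open Classical in
/-- Gutman's M-ary test with rejection and threshold `lam`. -/
noncomputable def gutmanM (M : ℕ) [NeZero M] (α lam : ℝ) (n : ℕ) : MTest X M α n :=
  fun xs y =>
    if ∃ i k : Fin M, i ≠ k ∧ GJS (empDist (xs i)) (empDist y) α ≤ lam ∧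
        GJS (empDist (xs k)) (empDist y) α ≤ lam then none
    else if h : ∃ j : Fin M, GJS (empDist (xs j)) (empDist y) α ≤ lam then some h.choose
    else some 0

/-- The fundamental limit `τ*(n, α, ε | Ψ_n^Gut, P)` in the dual setting for
Gutman's M-ary test. -/
noncomputable def tauStarGutM (M : ℕ) [NeZero M] (α : ℝ) (n : ℕ) (ε : ℝ)
    (P : Fin M → X → ℝ) : ℝ :=
  sSup {τ : ℝ | 0 ≤ τ ∧ ∃ lam : ℝ, 0 ≤ lam ∧
    (∀ Q : Fin M → X → ℝ, (∀ i, IsDist (Q i)) → ∀ j,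
      betaM (gutmanM M α lam n) Q j ≤ ε) ∧
    (∀ j, zetaM (gutmanM M α lam n) P j ≤ Real.exp (-((n : ℝ) * τ)))}

/-- Generalized divergence of three distributions
`D_γ(P1,P2,P3) = (γ-1)⁻¹ log Σ_x P1(x)^{1-γ} P2(x)^{γ/2} P3(x)^{γ/2}`. -/
noncomputable def genDiv (γ : ℝ) (P1 P2 P3 : X → ℝ) : ℝ :=
  (1 / (γ - 1)) * Real.log (∑ x, P1 x ^ (1 - γ) * P2 x ^ (γ / 2) * P3 x ^ (γ / 2))

/-- A binary classification test with the rejection option: `some 0` means "declare H₁",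
`some 1` means "declare H₂", `none` means "reject". -/
abbrev RTest (X : Type*) (α : ℝ) (n : ℕ) : Type _ :=
  (Fin (trainLen α n) → X) → (Fin (trainLen α n) → X) → (Fin n → X) → Option (Fin 2)

/-- Type-1 error probability of a rejection test: declare `H₂` under `H₁`. -/
noncomputable def beta1R {α : ℝ} {n : ℕ} (ψ : RTest X α n) (P1 P2 : X → ℝ) : ℝ :=
  ∑ x1 : Fin (trainLen α n) → X, ∑ x2 : Fin (trainLen α n) → X, ∑ y : Fin n → X,
    if ψ x1 x2 y = some 1 then seqProb P1 x1 * seqProb P2 x2 * seqProb P1 y else 0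

/-- Type-2 error probability of a rejection test: declare `H₁` under `H₂`. -/
noncomputable def beta2R {α : ℝ} {n : ℕ} (ψ : RTest X α n) (P1 P2 : X → ℝ) : ℝ :=
  ∑ x1 : Fin (trainLen α n) → X, ∑ x2 : Fin (trainLen α n) → X, ∑ y : Fin n → X,
    if ψ x1 x2 y = some 0 then seqProb P1 x1 * seqProb P2 x2 * seqProb P2 y else 0

open Classical in
/-- Type-`j` rejection probability of a binary rejection test. -/
noncomputable def zetaR {α : ℝ} {n : ℕ} (ψ : RTest X α n) (P1 P2 : X → ℝ) (j : Fin 2) : ℝ :=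
  ∑ x1 : Fin (trainLen α n) → X, ∑ x2 : Fin (trainLen α n) → X, ∑ y : Fin n → X,
    if ψ x1 x2 y = none then
      seqProb P1 x1 * seqProb P2 x2 * seqProb (if j = 0 then P1 else P2) y else 0

/-- A binary test is type-based if it depends on the data only through the
triple of empirical distributions. -/
def TypeBasedB {α : ℝ} {n : ℕ} (φ : BTest X α n) : Prop :=
  ∀ x1 x1' x2 x2' : Fin (trainLen α n) → X, ∀ y y' : Fin n → X,
    empDist x1 = empDist x1' → empDist x2 = empDist x2' → empDist y = empDist y' →
      φ x1 x2 y = φ x1' x2' y'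

/-- An M-ary test is type-based if it depends on the data only through the
tuple of empirical distributions. -/
def TypeBasedM {M : ℕ} {α : ℝ} {n : ℕ} (ψ : MTest X M α n) : Prop :=
  ∀ xs xs' : Fin M → Fin (trainLen α n) → X, ∀ y y' : Fin n → X,
    (∀ i, empDist (xs i) = empDist (xs' i)) → empDist y = empDist y' →
      ψ xs y = ψ xs' y'

open Classical in
/-- Probability of an event under hypothesis `H₂` in the binary setup. -/
noncomputable def prH2E (α : ℝ) (n : ℕ) (P1 P2 : X → ℝ)
    (E : (Fin (trainLen α n) → X) → (Fin (trainLen α n) → X) → (Fin n → X) → Prop) : ℝ :=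
  ∑ x1 : Fin (trainLen α n) → X, ∑ x2 : Fin (trainLen α n) → X, ∑ y : Fin n → X,
    if E x1 x2 y then seqProb P1 x1 * seqProb P2 x2 * seqProb P2 y else 0

open Classical in
/-- Probability of an event under hypothesis `H_j` in the M-ary setup. -/
noncomputable def prHjM (M : ℕ) (α : ℝ) (n : ℕ) (P : Fin M → X → ℝ) (j : Fin M)
    (E : (Fin M → Fin (trainLen α n) → X) → (Fin n → X) → Prop) : ℝ :=
  ∑ xs : Fin M → Fin (trainLen α n) → X, ∑ y : Fin n → X,
    if E xs y then (∏ i, seqProb (P i) (xs i)) * seqProb (P j) y else 0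

/-- `η_n(α) = |X| log(n+1)/n + 2|X| log(1+αn)/(αn)`. -/
noncomputable def etaN (X : Type*) [Fintype X] (α : ℝ) (n : ℕ) : ℝ :=
  (Fintype.card X : ℝ) * Real.log ((n : ℝ) + 1) / n +
    2 * (Fintype.card X : ℝ) * Real.log (1 + α * n) / (α * n)

/-- `η_{n,M} = M |X| log(nα+1)/(nα) + |X| log(n+1)/n`. -/
noncomputable def etaNM (X : Type*) [Fintype X] (M : ℕ) (α : ℝ) (n : ℕ) : ℝ :=
  (M : ℝ) * (Fintype.card X : ℝ) * Real.log ((n : ℝ) * α + 1) / ((n : ℝ) * α) +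
    (Fintype.card X : ℝ) * Real.log ((n : ℝ) + 1) / n

/-- `Q` is an `m`-type: the empirical distribution of some sequence of length `m`. -/
def IsTypeDist (m : ℕ) (Q : X → ℝ) : Prop := ∃ x : Fin m → X, empDist x = Q

/-- The type-restricted exponent function `F_n`. -/
noncomputable def Fn (n : ℕ) (P1 P2 : X → ℝ) (α lam : ℝ) : ℝ :=
  sInf {v : ℝ | ∃ Q1 Q2 : X → ℝ, IsTypeDist (trainLen α n) Q1 ∧ IsTypeDist n Q2 ∧
    GJS Q1 Q2 α ≤ lam ∧ v = α * klDivR Q1 P1 + klDivR Q2 P2}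

/-- The second smallest value of a finite family of reals:
`min_{i ≠ j} max (v i) (v j)`. -/
noncomputable def secondMin {M : ℕ} (v : Fin M → ℝ) : ℝ :=
  sInf {t : ℝ | ∃ i j : Fin M, i ≠ j ∧ t = max (v i) (v j)}

/-- The tilted distribution `P^{(γ)}` with `γ = α/(1+α)`. -/
noncomputable def tilt (α : ℝ) (P1 P2 : X → ℝ) : X → ℝ :=
  fun x => P1 x ^ (α / (1 + α)) * P2 x ^ (1 / (1 + α)) /
    ∑ a, P1 a ^ (α / (1 + α)) * P2 a ^ (1 / (1 + α))


set_option linter.unusedSectionVars false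

noncomputable def gam (t : ℝ) : ℝ := Real.exp (-t ^ 2 / 2)

lemma gam_pos (t : ℝ) : 0 < gam t := Real.exp_pos _
lemma gam_le_one (t : ℝ) : gam t ≤ 1 := by
  unfold gam; apply Real.exp_le_one_iff.2; nlinarith [sq_nonneg t]
lemma gam_cont : Continuous gam := by unfold gam; fun_prop
lemma gam_eq (t : ℝ) : gam t = Real.exp (-(1/2) * t ^ 2) := by unfold gam; congr 1; ring
lemma gam_int : Integrable gam := by
  have := integrable_exp_neg_mul_sq (b := 1/2) (by norm_num)
  simpa [funext gam_eq] using this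
lemma gam_mul_int : Integrable (fun t => t * gam t) := by
  have := integrable_mul_exp_neg_mul_sq (b := 1/2) (by norm_num)
  simpa [gam_eq] using this
lemma gam_total : ∫ t, gam t = Real.sqrt (2 * Real.pi) := by
  have := integral_gaussian (1/2)
  simp only [gam_eq, this]; congr 1; ring
lemma gam_deriv (t : ℝ) : HasDerivAt gam (-t * gam t) t := by
  unfold gam
  have : HasDerivAt (fun t : ℝ => -t ^ 2 / 2) (-t) t := by
    have := ((hasDerivAt_pow 2 t).neg).div_const 2
    convert! this using 1; simp; ring
  convert! this.exp using 1; ring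
lemma gam_neg (t : ℝ) : gam (-t) = gam t := by unfold gam; simp

lemma gam_tendsto : Tendsto gam atTop (𝓝 0) := by
  have h1 : Tendsto (fun t : ℝ => Real.exp (-t/2)) atTop (𝓝 0) := by
    apply Real.tendsto_exp_atBot.comp
    exact (tendsto_neg_atTop_atBot).atBot_div_const (by norm_num)
  refine squeeze_zero' (Eventually.of_forall fun t => (gam_pos t).le) ?_ h1
  filter_upwards [eventually_ge_atTop 1] with t ht
  unfold gam; apply Real.exp_le_exp.2; nlinarith

lemma mills_int (w : ℝ) : ∫ t in Set.Ioi w, t * gam t = gam w := by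
  have := integral_Ioi_of_hasDerivAt_of_tendsto' (a := w) (m := 0) (f := fun t => - gam t)
    (f' := fun t => t * gam t) (fun x _ => by
      convert! (gam_deriv x).neg using 1; ring) gam_mul_int.integrableOn
      (by simpa using gam_tendsto.neg)
  simpa using this

lemma mills (w : ℝ) : w * ∫ t in Set.Ioi w, gam t ≤ gam w := by
  rw [← mills_int w, ← integral_const_mul]
  apply setIntegral_mono_on (gam_int.const_mul w).integrableOn gam_mul_int.integrableOn
    measurableSet_Ioi
  intro x hx
  exact mul_le_mul_of_nonneg_right (le_of_lt hx) (gam_pos x).le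

lemma sqrt2pi_le : Real.sqrt (2 * Real.pi) ≤ 3 := by
  apply Real.sqrt_le_iff.2; constructor
  · norm_num
  · nlinarith [Real.pi_lt_four]
lemma one_le_sqrt2pi : 1 ≤ Real.sqrt (2 * Real.pi) := by
  apply Real.one_le_sqrt.2; nlinarith [Real.pi_gt_three]

lemma tail_bd (w : ℝ) (hw : 0 ≤ w) : (∫ t in Set.Ioi w, gam t) ≤ 6 * gam w := by
  rcases le_total 1 w with h | h
  · have h0 : 0 ≤ ∫ t in Set.Ioi w, gam t := integral_nonneg fun t => (gam_pos t).le
    nlinarith [mills w, gam_pos w]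
  · have h1 : (∫ t in Set.Ioi w, gam t) ≤ 3 := by
      refine le_trans ?_ sqrt2pi_le
      rw [← gam_total]
      exact setIntegral_le_integral gam_int (Eventually.of_forall fun t => (gam_pos t).le)
    have h2 : 1/2 ≤ gam w := by
      unfold gam
      have := Real.add_one_le_exp (-w^2/2)
      nlinarith
    linarith

lemma stdCDF_eq (x : ℝ) : stdCDF x = (Real.sqrt (2 * Real.pi))⁻¹ * ∫ t in Set.Iic x, gam t := rfl

lemma stdCDF_sub (a b : ℝ) : stdCDF b - stdCDF a = (Real.sqrt (2 * Real.pi))⁻¹ * ∫ t in a..b, gam t := by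
  rw [stdCDF_eq, stdCDF_eq, ← mul_sub, intervalIntegral.integral_Iic_sub_Iic gam_int.integrableOn gam_int.integrableOn]

lemma sc_pos : 0 < (Real.sqrt (2 * Real.pi))⁻¹ := by
  have := one_le_sqrt2pi
  positivity
lemma sc_le : (Real.sqrt (2 * Real.pi))⁻¹ ≤ 1 := inv_le_one_of_one_le₀ one_le_sqrt2pi

lemma stdCDF_lip {a b : ℝ} (h : a ≤ b) : stdCDF b ≤ stdCDF a + (b - a) := by
  have h1 := stdCDF_sub a b
  have h2 : ∫ t in a..b, gam t ≤ ∫ t in a..b, (1:ℝ) :=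
    intervalIntegral.integral_mono_on h (gam_cont.intervalIntegrable _ _) (by simp) fun x _ => gam_le_one x
  have h3 : 0 ≤ ∫ t in a..b, gam t := intervalIntegral.integral_nonneg h fun x _ => (gam_pos x).le
  simp at h2
  nlinarith [sc_le, sc_pos]

lemma stdCDF_low {a b c : ℝ} (h : a ≤ b) (hc : ∀ x ∈ Set.Icc a b, c ≤ gam x) :
    stdCDF a + (Real.sqrt (2 * Real.pi))⁻¹ * c * (b - a) ≤ stdCDF b := by
  have h1 := stdCDF_sub a b
  have h2 : ∫ t in a..b, c ≤ ∫ t in a..b, gam t :=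
    intervalIntegral.integral_mono_on h (by simp) (gam_cont.intervalIntegrable _ _) hc
  simp at h2
  nlinarith [sc_le, sc_pos]

lemma stdCDF_mono : Monotone stdCDF := fun a b h => by
  have := stdCDF_low (c := 0) h fun x _ => (gam_pos x).le
  simpa using this

lemma stdCDF_cont : Continuous stdCDF := by
  have : LipschitzWith 1 stdCDF := LipschitzWith.of_le_add fun x y => by
    rcases le_total x y with h | h
    · exact (stdCDF_mono h).trans (by simp)
    · rw [Real.dist_eq, abs_of_nonneg (by linarith)]; exact stdCDF_lip h
  exact this.continuous

lemma stdCDF_cdf (x : ℝ) : stdCDF x = ProbabilityTheory.cdf (ProbabilityTheory.gaussianReal 0 1) x := by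
  rw [ProbabilityTheory.cdf_eq_real, measureReal_def,
    ProbabilityTheory.gaussianReal_apply_eq_integral 0 (by norm_num), ENNReal.toReal_ofReal,
    stdCDF_eq, ← integral_const_mul]
  · congr 1; ext t; simp [ProbabilityTheory.gaussianPDFReal, gam]
  · exact integral_nonneg fun t => ProbabilityTheory.gaussianPDFReal_nonneg _ _ _

lemma stdCDFInv_spec {ε : ℝ} (hε : ε ∈ Set.Ioo (0:ℝ) 1) :
    ∃ c > (0:ℝ), ∀ d : ℝ, 0 ≤ d → d ≤ 1 → ε + c * d ≤ stdCDF (stdCDFInv ε + d) ∧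
      stdCDF (stdCDFInv ε - d) ≤ ε - c * d := by
  have key : ∀ z : ℝ, ∃ c > (0:ℝ), ∀ d : ℝ, 0 ≤ d → d ≤ 1 → stdCDF z + c * d ≤ stdCDF (z + d) ∧
      stdCDF (z - d) ≤ stdCDF z - c * d := by
    intro z
    refine ⟨(Real.sqrt (2 * Real.pi))⁻¹ * gam (|z| + 1), mul_pos sc_pos (gam_pos _), ?_⟩
    have hg : ∀ x, |x| ≤ |z| + 1 → gam (|z|+1) ≤ gam x := by
      intro x hx
      unfold gam
      apply Real.exp_le_exp.2
      have := sq_le_sq' (by linarith [abs_nonneg x]) hx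
      rw [sq_abs] at this
      linarith
    intro d h0 h1
    constructor
    · have := stdCDF_low (a := z) (b := z + d) (by linarith) (c := gam (|z|+1)) (fun x hx => hg x (by
        rw [abs_le]; constructor <;> linarith [hx.1, hx.2, le_abs_self z, neg_abs_le z]))
      simpa using this
    · have := stdCDF_low (a := z - d) (b := z) (by linarith) (c := gam (|z|+1)) (fun x hx => hg x (by
        rw [abs_le]; constructor <;> linarith [hx.1, hx.2, le_abs_self z, neg_abs_le z]))
      rw [sub_sub_cancel] at this
      linarith
  have hb : ∃ a, stdCDF a < ε := by
    have := (ProbabilityTheory.tendsto_cdf_atBot (ProbabilityTheory.gaussianReal 0 1)).eventually_lt_const hε.1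
    obtain ⟨a, ha⟩ := this.exists
    exact ⟨a, by rwa [stdCDF_cdf]⟩
  have ht : ∃ a, ε < stdCDF a := by
    have := (ProbabilityTheory.tendsto_cdf_atTop (ProbabilityTheory.gaussianReal 0 1)).eventually_const_lt hε.2
    obtain ⟨a, ha⟩ := this.exists
    exact ⟨a, by rwa [stdCDF_cdf]⟩
  obtain ⟨a, ha⟩ := hb
  obtain ⟨b, hb⟩ := ht
  obtain ⟨z, hz⟩ := mem_range_of_exists_le_of_exists_ge stdCDF_cont ⟨a, ha.le⟩ ⟨b, hb.le⟩
  have hz' : stdCDFInv ε = z := by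
    have : {x : ℝ | ε ≤ stdCDF x} = Set.Ici z := by
      ext x
      simp only [Set.mem_ofPred_eq, Set.mem_Ici]
      constructor
      · intro h
        by_contra! hx
        obtain ⟨c, hc, hk⟩ := key z
        have h1 := (hk (min 1 (z - x)) (by simp; linarith) (by simp)).2
        have h2 : stdCDF x ≤ stdCDF (z - min 1 (z-x)) := stdCDF_mono (by linarith [min_le_right 1 (z-x)])
        have h3 : 0 < c * min 1 (z-x) := mul_pos hc (by simp; linarith)
        linarith
      · intro h; rw [← hz]; exact stdCDF_mono h
    unfold stdCDFInv
    rw [this, csInf_Ici]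
  rw [hz', ← hz]; exact key z

/-- Solution to the Stein equation. -/
lemma stein (h : ℝ → ℝ) (hc : Continuous h) (h0 : ∀ x, 0 ≤ h x) (h1 : ∀ x, h x ≤ 1) :
    ∃ (f : ℝ → ℝ) (m : ℝ), m = (Real.sqrt (2 * Real.pi))⁻¹ * (∫ t, h t * gam t) ∧ 0 ≤ m ∧ m ≤ 1 ∧
      (∀ w, HasDerivAt f (w * f w + h w - m) w) ∧
      (∀ w, |f w| ≤ 6) ∧ ∀ w, |w * f w| ≤ 1 := by
  set m := (Real.sqrt (2 * Real.pi))⁻¹ * ∫ t, h t * gam t with hm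
  have hhi : Integrable (fun t => h t * gam t) := by
    refine gam_int.mono (hc.mul gam_cont).aestronglyMeasurable (Eventually.of_forall fun t => ?_)
    rw [Real.norm_eq_abs, Real.norm_eq_abs, abs_mul, abs_of_nonneg (h0 t)]
    exact mul_le_of_le_one_left (abs_nonneg _) (h1 t)
  have hsq : (0:ℝ) < Real.sqrt (2 * Real.pi) := by linarith [one_le_sqrt2pi]
  have hm0 : 0 ≤ m := mul_nonneg sc_pos.le (integral_nonneg fun t => mul_nonneg (h0 t) (gam_pos t).le)
  have hm1 : m ≤ 1 := by
    rw [hm, inv_mul_le_iff₀ hsq, mul_one, ← gam_total]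
    exact integral_mono hhi gam_int fun t => mul_le_of_le_one_left (gam_pos t).le (h1 t)
  set k : ℝ → ℝ := fun t => (h t - m) * gam t with hk
  have hkc : Continuous k := by have := gam_cont; fun_prop
  have hki : Integrable k := by
    have : k = fun t => h t * gam t - m * gam t := by ext t; simp [hk]; ring
    rw [this]; exact hhi.sub (gam_int.const_mul m)
  have hk0 : ∫ t, k t = 0 := by
    have : k = fun t => h t * gam t - m * gam t := by ext t; simp [hk]; ring
    rw [this, integral_sub hhi (gam_int.const_mul m), integral_const_mul, gam_total, hm]
    field_simp; ring
  have hkb : ∀ t, |k t| ≤ gam t := by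
    intro t
    rw [hk]; simp only
    rw [abs_mul, abs_of_pos (gam_pos t)]
    refine mul_le_of_le_one_left (gam_pos t).le ?_
    rw [abs_le]; constructor <;> linarith [h0 t, h1 t]
  have hset : ∀ s : Set ℝ, |∫ t in s, k t| ≤ ∫ t in s, gam t := fun s =>
    (abs_integral_le_integral_abs).trans (integral_mono hki.abs.integrableOn gam_int.integrableOn hkb)
  have hF : ∀ w, |∫ t in Set.Iic w, k t| ≤ ∫ t in Set.Ioi |w|, gam t := by
    intro w
    rcases le_total 0 w with hw | hw
    · have : (∫ t in Set.Iic w, k t) = - ∫ t in Set.Ioi w, k t := by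
        have := intervalIntegral.integral_Iic_add_Ioi (b := w) hki.integrableOn hki.integrableOn
        linarith
      rw [this, abs_neg, abs_of_nonneg hw]; exact hset _
    · rw [abs_of_nonpos hw, ← integral_comp_neg_Iic]
      simp only [gam_neg]; exact hset _
  refine ⟨fun w => (gam w)⁻¹ * ∫ t in Set.Iic w, k t, m, rfl, hm0, hm1, ?_, ?_, ?_⟩
  · intro w
    have d1 : HasDerivAt (fun w => ∫ t in Set.Iic w, k t) (k w) w := by
      have e : (fun w => ∫ t in Set.Iic w, k t) = fun w => (∫ t in Set.Iic 0, k t) + ∫ t in (0:ℝ)..w, k t := by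
        ext w
        rw [← intervalIntegral.integral_Iic_sub_Iic hki.integrableOn hki.integrableOn]; ring
      rw [e]
      exact (hkc.integral_hasStrictDerivAt 0 w).hasDerivAt.const_add _
    have d2 := ((gam_deriv w).inv (gam_pos w).ne').mul d1
    convert! d2 using 1
    have := (gam_pos w).ne'
    have ek : k w = (h w - m) * gam w := rfl
    rw [ek, Pi.inv_apply]
    beta_reduce
    generalize (∫ t in Set.Iic w, k t) = I
    field_simp
    ring
  · intro w
    rw [abs_mul, abs_of_pos (inv_pos.2 (gam_pos w)), inv_mul_le_iff₀ (gam_pos w)]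
    have e : gam |w| = gam w := by unfold gam; simp
    have := tail_bd |w| (abs_nonneg w)
    rw [e] at this
    linarith [hF w]
  · intro w
    rw [abs_mul, abs_mul, abs_of_pos (inv_pos.2 (gam_pos w)), mul_left_comm, inv_mul_le_iff₀ (gam_pos w)]
    have e : gam |w| = gam w := by unfold gam; simp
    have := mills |w|
    rw [e] at this
    have := mul_le_mul_of_nonneg_left (hF w) (abs_nonneg w)
    linarith

lemma stein_lip {f h : ℝ → ℝ} {m : ℝ} (h0 : ∀ x, 0 ≤ h x) (h1 : ∀ x, h x ≤ 1) (hm0 : 0 ≤ m) (hm1 : m ≤ 1)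
    (hf : ∀ w, HasDerivAt f (w * f w + h w - m) w) (b1 : ∀ w, |f w| ≤ 6) (b2 : ∀ w, |w * f w| ≤ 1)
    {a b R : ℝ} (ha : |a| ≤ R) (hb : |b| ≤ R) : |b * f b - a * f a| ≤ (6 + 2 * R) * |b - a| := by
  have := Convex.norm_image_sub_le_of_norm_hasDerivWithin_le (f := fun w => w * f w)
    (f' := fun w => 1 * f w + w * (w * f w + h w - m)) (s := Set.Icc (-R) R) (x := a) (y := b) (C := 6 + 2 * R)
    (fun w _ => ((hasDerivAt_id w).mul (hf w)).hasDerivWithinAt) ?_ (convex_Icc _ _) (abs_le.1 ha) (abs_le.1 hb)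
  · simpa [Real.norm_eq_abs] using this
  · intro w hw
    rw [Real.norm_eq_abs, one_mul]
    have hwR : |w| ≤ R := abs_le.2 hw
    have t1 : |w * f w + h w - m| ≤ 2 := by
      have := abs_le.1 (b2 w)
      rw [abs_le]; constructor <;> linarith [h0 w, h1 w]
    calc _ ≤ |f w| + |w * (w * f w + h w - m)| := abs_add_le _ _
      _ ≤ 6 + |w| * 2 := by
        rw [abs_mul]
        exact add_le_add (b1 w) (mul_le_mul_of_nonneg_left t1 (abs_nonneg w))
      _ ≤ _ := by linarith




section BE
variable {ι : Type*} [Fintype ι] [DecidableEq ι]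

noncomputable def Ex (p : ι → X → ℝ) (F : (ι → X) → ℝ) : ℝ := ∑ ω, (∏ i, p i (ω i)) * F ω

lemma Ex_one {p : ι → X → ℝ} (hp : ∀ i, IsDist (p i)) : ∑ ω : ι → X, (∏ i, p i (ω i)) = 1 := by
  have := (Finset.prod_univ_sum (fun _ : ι => (Finset.univ : Finset X)) (fun i x => p i x)).symm
  rw [Fintype.piFinset_univ] at this
  rw [this]
  simp [(hp _).2]

lemma Ex_const {p : ι → X → ℝ} (hp : ∀ i, IsDist (p i)) (c : ℝ) : Ex p (fun _ => c) = c := by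
  unfold Ex; rw [← Finset.sum_mul, Ex_one hp, one_mul]

lemma Ex_prod {p : ι → X → ℝ} (a : ι → X → ℝ) :
    Ex p (fun ω => ∏ i, a i (ω i)) = ∏ i, ∑ x, p i x * a i x := by
  have := (Finset.prod_univ_sum (fun _ : ι => (Finset.univ : Finset X)) (fun i x => p i x * a i x)).symm
  rw [Fintype.piFinset_univ] at this
  rw [← this]; unfold Ex
  simp [Finset.prod_mul_distrib]

lemma Ex_add (p : ι → X → ℝ) (F G : (ι → X) → ℝ) : Ex p (fun ω => F ω + G ω) = Ex p F + Ex p G := by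
  unfold Ex; simp [mul_add, Finset.sum_add_distrib]
lemma Ex_sub (p : ι → X → ℝ) (F G : (ι → X) → ℝ) : Ex p (fun ω => F ω - G ω) = Ex p F - Ex p G := by
  unfold Ex; simp [mul_sub, Finset.sum_sub_distrib]
lemma Ex_cmul (p : ι → X → ℝ) (c : ℝ) (G : (ι → X) → ℝ) : Ex p (fun ω => c * G ω) = c * Ex p G := by
  unfold Ex; rw [Finset.mul_sum]; congr 1; ext; ring
lemma Ex_sum (p : ι → X → ℝ) {κ : Type*} (s : Finset κ) (G : κ → (ι → X) → ℝ) :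
    Ex p (fun ω => ∑ k ∈ s, G k ω) = ∑ k ∈ s, Ex p (G k) := by
  unfold Ex; rw [Finset.sum_comm]; simp [Finset.mul_sum]
lemma wt_nonneg {p : ι → X → ℝ} (hp : ∀ i, IsDist (p i)) (ω : ι → X) : 0 ≤ ∏ i, p i (ω i) :=
  Finset.prod_nonneg fun i _ => (hp i).1 _
lemma Ex_mono {p : ι → X → ℝ} (hp : ∀ i, IsDist (p i)) {F G : (ι → X) → ℝ} (h : ∀ ω, F ω ≤ G ω) :
    Ex p F ≤ Ex p G :=
  Finset.sum_le_sum fun ω _ => mul_le_mul_of_nonneg_left (h ω) (wt_nonneg hp ω)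

lemma Ex_resample {p : ι → X → ℝ} (hp : ∀ i, IsDist (p i)) (i : ι) (F : (ι → X) → ℝ) :
    Ex p F = Ex p (fun ω => ∑ x, p i x * F (Function.update ω i x)) := by
  unfold Ex
  have h1 : ∑ ω : ι → X, (∏ j, p j (ω j)) * F ω
      = ∑ z : (ι → X) × X, (∏ j, p j (z.1 j)) * p i z.2 * F z.1 := by
    rw [Fintype.sum_prod_type]
    refine Finset.sum_congr rfl fun ω _ => ?_
    dsimp only
    rw [← Finset.sum_mul, ← Finset.mul_sum, (hp i).2, mul_one]
  have h2 : ∑ ω : ι → X, (∏ j, p j (ω j)) * ∑ x, p i x * F (Function.update ω i x)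
      = ∑ z : (ι → X) × X, (∏ j, p j (z.1 j)) * p i z.2 * F (Function.update z.1 i z.2) := by
    rw [Fintype.sum_prod_type]
    refine Finset.sum_congr rfl fun ω _ => ?_
    rw [Finset.mul_sum]
    refine Finset.sum_congr rfl fun x _ => by ring
  rw [h1, h2]
  refine Finset.sum_nbij' (fun z => (Function.update z.1 i z.2, z.1 i))
    (fun z => (Function.update z.1 i z.2, z.1 i)) (by simp) (by simp) (by simp) (by simp) ?_
  rintro ⟨ω, x⟩ -
  simp only [Function.update_idem, Function.update_eq_self]
  congr 1
  rw [← Finset.mul_prod_erase _ _ (Finset.mem_univ i), ← Finset.mul_prod_erase (a := i) _ _ (Finset.mem_univ i)]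
  have : ∏ j ∈ Finset.univ.erase i, p j (Function.update ω i x j) = ∏ j ∈ Finset.univ.erase i, p j (ω j) :=
    Finset.prod_congr rfl fun j hj => by rw [Function.update_of_ne (Finset.ne_of_mem_erase hj)]
  rw [this, Function.update_self]; ring

lemma Ex_indep {p : ι → X → ℝ} (hp : ∀ i, IsDist (p i)) (i : ι) (a : X → ℝ) (G : (ι → X) → ℝ)
    (hG : ∀ ω x, G (Function.update ω i x) = G ω) :
    Ex p (fun ω => a (ω i) * G ω) = (∑ x, p i x * a x) * Ex p G := by
  rw [Ex_resample hp i, ← Ex_cmul]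
  congr 1; ext ω
  rw [Finset.sum_mul]
  refine Finset.sum_congr rfl fun x _ => ?_
  rw [hG, Function.update_self]; ring

lemma loo_update (ξ : ι → X → ℝ) (i : ι) (ω : ι → X) (x : X) :
    (∑ j, ξ j (Function.update ω i x j)) - ξ i (Function.update ω i x i) = (∑ j, ξ j (ω j)) - ξ i (ω i) := by
  rw [← Finset.add_sum_erase _ _ (Finset.mem_univ i), ← Finset.add_sum_erase (a := i) _ _ (Finset.mem_univ i)]
  have : ∑ j ∈ Finset.univ.erase i, ξ j (Function.update ω i x j) = ∑ j ∈ Finset.univ.erase i, ξ j (ω j) :=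
    Finset.sum_congr rfl fun j hj => by rw [Function.update_of_ne (Finset.ne_of_mem_erase hj)]
  rw [this]; ring

lemma Ex_sq {p : ι → X → ℝ} (hp : ∀ i, IsDist (p i)) (ξ : ι → X → ℝ)
    (hm : ∀ i, ∑ x, p i x * ξ i x = 0) (hs : ∑ i, ∑ x, p i x * ξ i x ^ 2 = 1) :
    Ex p (fun ω => (∑ j, ξ j (ω j)) ^ 2) = 1 := by
  have : (fun ω : ι → X => (∑ j, ξ j (ω j)) ^ 2) = fun ω => ∑ i, (ξ i (ω i) * ((∑ j, ξ j (ω j)) - ξ i (ω i)) + ξ i (ω i) ^ 2 * 1) := by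
    ext ω
    rw [sq, Finset.sum_mul]
    refine Finset.sum_congr rfl fun i _ => by ring
  rw [this, Ex_sum]
  refine Eq.trans ?_ hs
  refine Finset.sum_congr rfl fun i _ => ?_
  rw [Ex_add, Ex_indep hp i (ξ i) (fun ω => (∑ j, ξ j (ω j)) - ξ i (ω i)) (loo_update ξ i),
    Ex_indep hp i (fun x => ξ i x ^ 2) (fun _ => 1) (fun _ _ => rfl), hm, Ex_const hp]
  ring

lemma be_core {p : ι → X → ℝ} (hp : ∀ i, IsDist (p i)) (ξ : ι → X → ℝ)
    (hm : ∀ i, ∑ x, p i x * ξ i x = 0) (hs : ∑ i, ∑ x, p i x * ξ i x ^ 2 = 1)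
    {δ : ℝ} (hδ0 : 0 ≤ δ) (hδ1 : δ ≤ 1) (hb : ∀ i x, |ξ i x| ≤ δ)
    (h : ℝ → ℝ) (hc : Continuous h) (ha : Antitone h) (h0 : ∀ x, 0 ≤ h x) (h1 : ∀ x, h x ≤ 1) :
    (Real.sqrt (2 * Real.pi))⁻¹ * (∫ t, h t * gam t) ≤ Ex p (fun ω => h ((∑ j, ξ j (ω j)) - 2 * δ)) + 22 * δ := by
  obtain ⟨f, m, hmm, hm0, hm1, hf, b1, b2⟩ := stein h hc h0 h1
  rw [← hmm]
  set W : (ι → X) → ℝ := fun ω => ∑ j, ξ j (ω j) with hW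
  -- pointwise
  have pt : ∀ w e : ℝ, |e| ≤ δ → e * (f (w + e) - f w) ≤
      e ^ 2 * (w * f w + h (w - δ) - m + δ * (6 + 2 * (|w| + δ))) := by
    intro w e he
    obtain ⟨c, hc1, hc2⟩ : ∃ c, |c - w| ≤ δ ∧ f (w + e) - f w = e * (c * f c + h c - m) := by
      have hcont : Continuous f := continuous_iff_continuousAt.2 fun x => (hf x).continuousAt
      rcases lt_trichotomy e 0 with hlt | heq | hgt
      · obtain ⟨c, hcm, hce⟩ := exists_hasDerivAt_eq_slope f _ (show w + e < w by linarith) hcont.continuousOn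
          (fun x _ => hf x)
        refine ⟨c, ?_, ?_⟩
        · have := abs_le.1 he
          rw [abs_le]; constructor <;> linarith [hcm.1, hcm.2]
        · rw [hce]
          have : w - (w + e) ≠ 0 := by simp; exact hlt.ne
          field_simp
          ring
      · exact ⟨w, by simpa using hδ0, by simp [heq]⟩
      · obtain ⟨c, hcm, hce⟩ := exists_hasDerivAt_eq_slope f _ (show w < w + e by linarith) hcont.continuousOn
          (fun x _ => hf x)
        refine ⟨c, ?_, ?_⟩
        · have := abs_le.1 he
          rw [abs_le]; constructor <;> linarith [hcm.1, hcm.2]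
        · rw [hce]
          have : w + e - w ≠ 0 := by simp; exact hgt.ne'
          field_simp
          ring
    rw [hc2, ← mul_assoc, ← sq]
    apply mul_le_mul_of_nonneg_left _ (sq_nonneg e)
    have hcw := abs_le.1 hc1
    have l := stein_lip (R := |w| + δ) h0 h1 hm0 hm1 hf b1 b2 (a := w) (b := c) (by linarith)
      (by have := abs_add_le (c - w) w; rw [sub_add_cancel] at this; linarith)
    have l2 : (6 + 2 * (|w| + δ)) * |c - w| ≤ (6 + 2 * (|w| + δ)) * δ :=
      mul_le_mul_of_nonneg_left hc1 (by positivity)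
    have l3 := (abs_le.1 l).2
    have l4 : h c ≤ h (w - δ) := ha (by linarith)
    linarith
  -- per-coordinate
  have hi : ∀ i, Ex p (fun ω => ξ i (ω i) * f (W ω)) ≤ (∑ x, p i x * ξ i x ^ 2) *
      Ex p (fun ω => W ω * f (W ω) + h (W ω - 2 * δ) + (- m + δ * 18) + 4 * δ * |W ω|) := by
    intro i
    have e1 : Ex p (fun ω => ξ i (ω i) * f (W ω)) =
        Ex p (fun ω => ξ i (ω i) * (f (W ω) - f (W ω - ξ i (ω i)))) := by
      have : (fun ω => ξ i (ω i) * f (W ω)) = fun ω => ξ i (ω i) * (f (W ω) - f (W ω - ξ i (ω i))) + ξ i (ω i) * f (W ω - ξ i (ω i)) := by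
        ext ω; ring
      rw [this, Ex_add, Ex_indep hp i (ξ i) (fun ω => f (W ω - ξ i (ω i))) (fun ω x => by
        simp only [hW]; rw [loo_update]), hm, zero_mul, add_zero]
    rw [e1]
    calc _ ≤ Ex p (fun ω => ξ i (ω i) ^ 2 * ((W ω - ξ i (ω i)) * f (W ω - ξ i (ω i)) + h (W ω - ξ i (ω i) - δ) - m + δ * (6 + 2 * (|W ω - ξ i (ω i)| + δ)))) := by
          apply Ex_mono hp
          intro ω
          have := pt (W ω - ξ i (ω i)) (ξ i (ω i)) (hb _ _)
          rwa [sub_add_cancel] at this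
      _ = (∑ x, p i x * ξ i x ^ 2) * Ex p (fun ω => ((W ω - ξ i (ω i)) * f (W ω - ξ i (ω i)) + h (W ω - ξ i (ω i) - δ) - m + δ * (6 + 2 * (|W ω - ξ i (ω i)| + δ)))) := by
          rw [← Ex_indep hp i (fun x => ξ i x ^ 2)]
          intro ω x
          simp only [hW]; rw [loo_update]
      _ ≤ _ := by
          apply mul_le_mul_of_nonneg_left _ (Finset.sum_nonneg fun x _ => mul_nonneg ((hp i).1 x) (sq_nonneg _))
          apply Ex_mono hp
          intro ω
          have hbi := hb i (ω i)
          have hbi' := abs_le.1 hbi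
          generalize ξ i (ω i) = e at *
          generalize W ω = w at *
          have a1 : |w - e| ≤ |w| + δ := (abs_sub _ _).trans (by linarith)
          have l := stein_lip (R := |w| + δ) h0 h1 hm0 hm1 hf b1 b2 (a := w) (b := w - e) (by linarith) a1
          have l2 : (6 + 2 * (|w| + δ)) * |w - e - w| ≤ (6 + 2 * (|w| + δ)) * δ := by
            apply mul_le_mul_of_nonneg_left _ (by positivity)
            simpa using hbi
          have l3 := (abs_le.1 l).2
          have l4 : h (w - e - δ) ≤ h (w - 2 * δ) := ha (by linarith)
          have l5 : δ * |w - e| ≤ δ * (|w| + δ) := mul_le_mul_of_nonneg_left a1 hδ0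
          nlinarith
  have hsum := Finset.sum_le_sum (s := Finset.univ) fun i _ => hi i
  rw [← Finset.sum_mul, hs, one_mul, ← Ex_sum] at hsum
  have e2 : (fun ω => ∑ i, ξ i (ω i) * f (W ω)) = fun ω => W ω * f (W ω) := by
    ext ω; rw [← Finset.sum_mul]
  rw [e2, Ex_add, Ex_add, Ex_add, Ex_const hp, Ex_cmul] at hsum
  have habs : Ex p (fun ω => |W ω|) ≤ 1 := by
    have : Ex p (fun ω => |W ω|) ≤ Ex p (fun ω => 1/2 + 1/2 * (W ω) ^ 2) := by
      apply Ex_mono hp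
      intro ω
      have := sq_nonneg (|W ω| - 1)
      have := sq_abs (W ω)
      nlinarith
    rw [Ex_add, Ex_const hp, Ex_cmul, Ex_sq hp ξ hm hs] at this
    linarith
  nlinarith

open Classical in
lemma be_lower {p : ι → X → ℝ} (hp : ∀ i, IsDist (p i)) (ξ : ι → X → ℝ)
    (hm : ∀ i, ∑ x, p i x * ξ i x = 0) (hs : ∑ i, ∑ x, p i x * ξ i x ^ 2 = 1)
    {δ : ℝ} (hδ0 : 0 < δ) (hδ1 : δ ≤ 1) (hb : ∀ i x, |ξ i x| ≤ δ) (z : ℝ) :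
    stdCDF z - 25 * δ ≤ Ex p (fun ω => if (∑ j, ξ j (ω j)) < z then 1 else 0) := by
  set h : ℝ → ℝ := fun x => max 0 (min 1 ((z - 2 * δ - x) / δ)) with hh
  have h0 : ∀ x, 0 ≤ h x := fun x => le_max_left _ _
  have h1 : ∀ x, h x ≤ 1 := fun x => max_le (by norm_num) (min_le_left _ _)
  have hc : Continuous h := by fun_prop
  have ha : Antitone h := by
    intro x y hxy
    simp only [hh]
    gcongr
  have core := be_core hp ξ hm hs hδ0.le hδ1 hb h hc ha h0 h1
  have hhi : Integrable (fun t => h t * gam t) := by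
    refine gam_int.mono (hc.mul gam_cont).aestronglyMeasurable (Eventually.of_forall fun t => ?_)
    rw [Real.norm_eq_abs, Real.norm_eq_abs, abs_mul, abs_of_nonneg (h0 t)]
    exact mul_le_of_le_one_left (abs_nonneg _) (h1 t)
  have low : stdCDF (z - 3 * δ) ≤ (Real.sqrt (2 * Real.pi))⁻¹ * (∫ t, h t * gam t) := by
    rw [stdCDF_eq]
    apply mul_le_mul_of_nonneg_left _ sc_pos.le
    calc _ = ∫ t in Set.Iic (z - 3 * δ), h t * gam t := by
          apply setIntegral_congr_fun measurableSet_Iic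
          intro t ht
          have ht' : t ≤ z - 3 * δ := ht
          have : 1 ≤ (z - 2 * δ - t) / δ := by rw [le_div_iff₀ hδ0]; linarith
          simp [hh, min_eq_left this]
      _ ≤ _ := setIntegral_le_integral hhi (Eventually.of_forall fun t => mul_nonneg (h0 t) (gam_pos t).le)
  have l3 := stdCDF_lip (show z - 3 * δ ≤ z by linarith)
  have l4 : Ex p (fun ω => h ((∑ j, ξ j (ω j)) - 2 * δ)) ≤ Ex p (fun ω => if (∑ j, ξ j (ω j)) < z then 1 else 0) := by
    apply Ex_mono hp
    intro ω
    split_ifs with hlt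
    · exact h1 _
    · push Not at hlt
      have : (z - 2 * δ - ((∑ j, ξ j (ω j)) - 2 * δ)) / δ ≤ 0 :=
        div_nonpos_of_nonpos_of_nonneg (by linarith) hδ0.le
      simp only [hh]
      exact max_le le_rfl ((min_le_right _ _).trans this)
  linarith

lemma stdCDF_neg (z : ℝ) : stdCDF (-z) = 1 - stdCDF z := by
  have h1 : ∫ t in Set.Iic (-z), gam t = ∫ t in Set.Ioi z, gam t := by
    have := integral_comp_neg_Iic (-z) gam
    simp only [gam_neg, neg_neg] at this
    exact this
  have h2 := intervalIntegral.integral_Iic_add_Ioi (b := z) gam_int.integrableOn gam_int.integrableOn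
  rw [gam_total] at h2
  have h3 : (0:ℝ) < Real.sqrt (2 * Real.pi) := by linarith [one_le_sqrt2pi]
  rw [stdCDF_eq, stdCDF_eq, h1]
  field_simp
  linarith

open Classical in
lemma be_upper {p : ι → X → ℝ} (hp : ∀ i, IsDist (p i)) (ξ : ι → X → ℝ)
    (hm : ∀ i, ∑ x, p i x * ξ i x = 0) (hs : ∑ i, ∑ x, p i x * ξ i x ^ 2 = 1)
    {δ : ℝ} (hδ0 : 0 < δ) (hδ1 : δ ≤ 1) (hb : ∀ i x, |ξ i x| ≤ δ) (z : ℝ) :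
    Ex p (fun ω => if (∑ j, ξ j (ω j)) ≤ z then 1 else 0) ≤ stdCDF z + 25 * δ := by
  have := be_lower hp (fun i x => - ξ i x) (fun i => by simp [hm]) (by simpa using hs) hδ0 hδ1
    (by simpa using hb) (-z)
  rw [stdCDF_neg] at this
  have e : Ex p (fun ω => if (∑ j, - ξ j (ω j)) < -z then (1:ℝ) else 0) = 1 - Ex p (fun ω => if (∑ j, ξ j (ω j)) ≤ z then 1 else 0) := by
    have e1 := Ex_const hp (1:ℝ)
    rw [eq_sub_iff_add_eq, ← Ex_add, ← e1]
    congr 1; ext ω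
    simp only [Finset.sum_neg_distrib, neg_lt_neg_iff, e1]
    by_cases hh : (∑ j, ξ j (ω j)) ≤ z
    · simp [hh, not_lt.2 hh]
    · simp [hh, not_le.1 hh]
  rw [e] at this
  linarith

open Classical in
/-- A Hoeffding-type bound. -/
lemma tail_prob {p : ι → X → ℝ} (hp : ∀ i, IsDist (p i)) (ξ : ι → X → ℝ)
    (hm : ∀ i, ∑ x, p i x * ξ i x = 0) (hb : ∀ i x, |ξ i x| ≤ 1) {θ : ℝ} (h0 : 0 ≤ θ) (h1 : θ ≤ 1) (τ : ℝ) :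
    Ex p (fun ω => if τ ≤ (∑ j, ξ j (ω j)) then 1 else 0) ≤ Real.exp (θ ^ 2 * Fintype.card ι - θ * τ) := by
  have m1 : Ex p (fun ω => if τ ≤ (∑ j, ξ j (ω j)) then 1 else 0) ≤
      Ex p (fun ω => Real.exp (- (θ * τ)) * ∏ j, Real.exp (θ * ξ j (ω j))) := by
    apply Ex_mono hp
    intro ω
    rw [← Real.exp_sum, ← Real.exp_add, ← Finset.mul_sum]
    split_ifs with hh
    · apply Real.one_le_exp; nlinarith
    · exact (Real.exp_pos _).le
  refine m1.trans ?_
  rw [Ex_cmul, Ex_prod (a := fun j x => Real.exp (θ * ξ j x))]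
  have m2 : ∀ i, ∑ x, p i x * Real.exp (θ * ξ i x) ≤ Real.exp (θ ^ 2) := by
    intro i
    calc _ ≤ ∑ x, p i x * (1 + θ * ξ i x + θ ^ 2) := by
          apply Finset.sum_le_sum
          intro x _
          apply mul_le_mul_of_nonneg_left _ ((hp i).1 x)
          have ab : |θ * ξ i x| ≤ θ := by
            rw [abs_mul, abs_of_nonneg h0]; exact mul_le_of_le_one_right h0 (hb i x)
          have := (abs_le.1 (Real.abs_exp_sub_one_sub_id_le (x := θ * ξ i x) (ab.trans h1))).2
          have := sq_le_sq' (abs_le.1 ab).1 (abs_le.1 ab).2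
          linarith
      _ = 1 + θ ^ 2 := by
          have : ∀ x, p i x * (1 + θ * ξ i x + θ ^ 2) = p i x * (1 + θ ^ 2) + θ * (p i x * ξ i x) := fun x => by ring
          simp only [this, Finset.sum_add_distrib, ← Finset.sum_mul, ← Finset.mul_sum, hm, (hp i).2]
          ring
      _ ≤ _ := by linarith [Real.add_one_le_exp (θ ^ 2)]
  have m3 : ∏ i, ∑ x, p i x * Real.exp (θ * ξ i x) ≤ ∏ _i : ι, Real.exp (θ ^ 2) :=
    Finset.prod_le_prod (fun i _ => Finset.sum_nonneg fun x _ => mul_nonneg ((hp i).1 x) (Real.exp_pos _).le)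
      fun i _ => m2 i
  calc _ ≤ Real.exp (-(θ * τ)) * ∏ _i : ι, Real.exp (θ ^ 2) := mul_le_mul_of_nonneg_left m3 (Real.exp_pos _).le
    _ = _ := by
      rw [← Real.exp_sum, ← Real.exp_add]; congr 1; simp; ring

end BE


section C
variable {ι : Type*} [Fintype ι] [DecidableEq ι]

lemma Ex_mono' {p : ι → X → ℝ} (hp : ∀ i, IsDist (p i)) {F G : (ι → X) → ℝ}
    (h : ∀ ω, (∀ i, 0 < p i (ω i)) → F ω ≤ G ω) : Ex p F ≤ Ex p G := by
  apply Finset.sum_le_sum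
  intro ω _
  by_cases hz : ∀ i, 0 < p i (ω i)
  · exact mul_le_mul_of_nonneg_left (h ω hz) (wt_nonneg hp ω)
  · push Not at hz
    obtain ⟨i, hi⟩ := hz
    have : ∏ i, p i (ω i) = 0 := Finset.prod_eq_zero (Finset.mem_univ i) (le_antisymm hi ((hp i).1 _))
    rw [this, zero_mul, zero_mul]

noncomputable def pp (P1 P2 : X → ℝ) (N n : ℕ) : Fin N ⊕ Fin n → X → ℝ :=
  Sum.elim (fun _ => P1) (fun _ => P2)

lemma pp_dist {P1 P2 : X → ℝ} (h1 : IsDist P1) (h2 : IsDist P2) (N n : ℕ) (i) : IsDist (pp P1 P2 N n i) := by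
  cases i <;> simpa [pp]

lemma sum_conv (P1 P2 : X → ℝ) (N n : ℕ) (S : (Fin N → X) → (Fin n → X) → Prop) [∀ x y, Decidable (S x y)] :
    (∑ x : Fin N → X, ∑ y : Fin n → X, if S x y then seqProb P1 x * seqProb P2 y else 0) =
      Ex (pp P1 P2 N n) (fun ω => if S (fun i => ω (Sum.inl i)) (fun i => ω (Sum.inr i)) then 1 else 0) := by
  unfold Ex
  rw [← Fintype.sum_prod_type']
  refine (Fintype.sum_equiv (Equiv.sumArrowEquivProdArrow (Fin N) (Fin n) X) _ _ ?_).symm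
  intro ω
  simp [seqProb, Fintype.prod_sum_type, pp, Equiv.sumArrowEquivProdArrow, Function.comp_def]
  congr 1

lemma mix_dist {P1 P2 : X → ℝ} (h1 : IsDist P1) (h2 : IsDist P2) {α : ℝ} (hα : 0 < α) : IsDist (mix P1 P2 α) := by
  constructor
  · intro x; unfold mix
    have := h1.1 x; have := h2.1 x
    positivity
  · unfold mix
    rw [← Finset.sum_div, Finset.sum_add_distrib, ← Finset.mul_sum, h1.2, h2.2]
    field_simp
    ring

lemma dens1_eq {P1 P2 : X → ℝ} {α : ℝ} (x : X) :
    (1 + α) * P1 x / (α * P1 x + P2 x) = P1 x / mix P1 P2 α x := by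
  unfold mix; rw [div_div_eq_mul_div, mul_comm]
lemma dens2_eq {P1 P2 : X → ℝ} {α : ℝ} (x : X) :
    (1 + α) * P2 x / (α * P1 x + P2 x) = P2 x / mix P1 P2 α x := by
  unfold mix; rw [div_div_eq_mul_div, mul_comm]

lemma mix_pos1 {P1 P2 : X → ℝ} (h2 : IsDist P2) {α : ℝ} (hα : 0 < α) {x : X} (h : 0 < P1 x) : 0 < mix P1 P2 α x := by
  unfold mix; have := h2.1 x; positivity
lemma mix_pos2 {P1 P2 : X → ℝ} (h1 : IsDist P1) {α : ℝ} (hα : 0 < α) {x : X} (h : 0 < P2 x) : 0 < mix P1 P2 α x := by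
  unfold mix; have := h1.1 x; positivity

lemma GJS_eq (P1 P2 : X → ℝ) (α : ℝ) :
    GJS P1 P2 α = α * expect P1 (iDens1 P1 P2 α) + expect P2 (iDens2 P1 P2 α) := by
  unfold GJS expect klDivR iDens1 iDens2
  simp only [dens1_eq, dens2_eq]

noncomputable def dd (P1 P2 : X → ℝ) (α : ℝ) (N n : ℕ) : Fin N ⊕ Fin n → X → ℝ :=
  Sum.elim (fun _ => iDens1 P1 P2 α) (fun _ => iDens2 P1 P2 α)

lemma pp_eq {P1 P2 : X → ℝ} (h1 : IsDist P1) (h2 : IsDist P2) {α : ℝ} (hα : 0 < α) {N n : ℕ} (i) (x : X)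
    (h : 0 < pp P1 P2 N n i x) :
    0 < mix P1 P2 α x ∧ pp P1 P2 N n i x = mix P1 P2 α x * Real.exp (dd P1 P2 α N n i x) := by
  cases i with
  | inl i =>
    simp only [pp, dd, Sum.elim_inl] at *
    have hq := mix_pos1 h2 hα h
    refine ⟨hq, ?_⟩
    unfold iDens1
    rw [dens1_eq, Real.exp_log (div_pos h hq)]; field_simp
  | inr i =>
    simp only [pp, dd, Sum.elim_inr] at *
    have hq := mix_pos2 h1 hα h
    refine ⟨hq, ?_⟩
    unfold iDens2
    rw [dens2_eq, Real.exp_log (div_pos h hq)]; field_simp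

lemma wt_eq {P1 P2 : X → ℝ} (h1 : IsDist P1) (h2 : IsDist P2) {α : ℝ} (hα : 0 < α) {N n : ℕ}
    (ω : Fin N ⊕ Fin n → X) (h : ∀ i, 0 < pp P1 P2 N n i (ω i)) :
    ∏ i, pp P1 P2 N n i (ω i) = (∏ i, mix P1 P2 α (ω i)) * Real.exp (∑ i, dd P1 P2 α N n i (ω i)) := by
  rw [Real.exp_sum, ← Finset.prod_mul_distrib]
  exact Finset.prod_congr rfl fun i _ => (pp_eq h1 h2 hα i _ (h i)).2

lemma pp_self (q : X → ℝ) (N n : ℕ) (i) : pp q q N n i = q := by cases i <;> rfl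

open Classical in
lemma converse {P1 P2 : X → ℝ} (h1 : IsDist P1) (h2 : IsDist P2) {α : ℝ} (hα : 0 < α) {N n : ℕ}
    (S : (Fin N ⊕ Fin n → X) → Prop) (t : ℝ) :
    Ex (pp P1 P2 N n) (fun ω => if (∑ i, dd P1 P2 α N n i (ω i)) < t then 1 else 0) ≤
      Ex (pp P1 P2 N n) (fun ω => if ¬ S ω then 1 else 0) +
      Real.exp t * Ex (pp (mix P1 P2 α) (mix P1 P2 α) N n) (fun ω => if S ω then 1 else 0) := by
  unfold Ex
  rw [Finset.mul_sum, ← Finset.sum_add_distrib]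
  apply Finset.sum_le_sum
  intro ω _
  simp only [pp_self]
  have hq : 0 ≤ ∏ i, mix P1 P2 α (ω i) := Finset.prod_nonneg fun i _ => (mix_dist h1 h2 hα).1 _
  have hw := wt_nonneg (pp_dist h1 h2 N n) ω
  by_cases hS : S ω
  · simp only [hS, not_true_eq_false, if_false, if_true, mul_zero, zero_add, mul_one]
    split_ifs with hL
    · rw [mul_one]
      by_cases hz : ∀ i, 0 < pp P1 P2 N n i (ω i)
      · rw [wt_eq h1 h2 hα ω hz, mul_comm]
        exact mul_le_mul_of_nonneg_right (Real.exp_le_exp.2 hL.le) hq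
      · push Not at hz
        obtain ⟨i, hi⟩ := hz
        have : ∏ i, pp P1 P2 N n i (ω i) = 0 :=
          Finset.prod_eq_zero (Finset.mem_univ i) (le_antisymm hi ((pp_dist h1 h2 N n i).1 _))
        rw [this]; positivity
    · rw [mul_zero]; positivity
  · simp only [hS, not_false_eq_true, if_false, if_true, mul_zero, add_zero]
    apply mul_le_mul_of_nonneg_left _ hw
    split_ifs <;> norm_num

lemma gibbs [Nonempty ι] {q Q : X → ℝ} (hq : IsDist q) (hQ : IsDist Q) (ω : ι → X) (hω : ∀ i, 0 < q (ω i))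
    {r : ℝ} (hr : ∀ x, |(∑ i, if ω i = x then (1:ℝ) else 0) - Fintype.card ι * q x| ≤ r) :
    ∏ i, Q (ω i) ≤ (∏ i, q (ω i)) * Real.exp (r ^ 2 / Fintype.card ι * ∑ x, (q x)⁻¹) := by
  have hqp : 0 < ∏ i, q (ω i) := Finset.prod_pos fun i _ => hω i
  by_cases hz : ∀ i, 0 < Q (ω i)
  swap
  · push Not at hz
    obtain ⟨i, hi⟩ := hz
    have : ∏ i, Q (ω i) = 0 := Finset.prod_eq_zero (Finset.mem_univ i) (le_antisymm hi (hQ.1 _))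
    rw [this]; positivity
  set M : ℝ := (Fintype.card ι : ℝ) with hM
  have hMp : 0 < M := by rw [hM]; exact_mod_cast Fintype.card_pos
  set c : X → ℝ := fun x => ∑ i, if ω i = x then (1:ℝ) else 0 with hc
  have hcomp : ∀ g : X → ℝ, ∑ i, g (ω i) = ∑ x, c x * g x := by
    intro g
    simp only [hc, Finset.sum_mul]
    rw [Finset.sum_comm]
    refine Finset.sum_congr rfl fun i _ => ?_
    simp
  have hc0 : ∀ x, 0 ≤ c x := fun x => Finset.sum_nonneg fun i _ => by split_ifs <;> norm_num
  have hcs : ∑ x, c x = M := by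
    have := hcomp (fun _ => 1)
    simp at this
    rw [← this]
  have hcp : ∀ i, 0 < c (ω i) := by
    intro i
    refine Finset.sum_pos' (fun j _ => by split_ifs <;> norm_num) ⟨i, Finset.mem_univ _, by simp⟩
  have hcq : ∀ x, q x = 0 → c x = 0 := by
    intro x hx
    simp only [hc]
    refine Finset.sum_eq_zero fun i _ => ?_
    rw [if_neg]
    rintro rfl
    exact (hω i).ne' hx
  have hlog : ∀ i, Real.log (Q (ω i) / q (ω i)) ≤ (M * Q (ω i) / c (ω i) - 1) + (c (ω i) / (M * q (ω i)) - 1) := by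
    intro i
    have a := hz i; have b := hω i; have d := hcp i
    have e : Q (ω i) / q (ω i) = (M * Q (ω i) / c (ω i)) * (c (ω i) / (M * q (ω i))) := by field_simp
    rw [e, Real.log_mul (by positivity) (by positivity)]
    exact add_le_add (Real.log_le_sub_one_of_pos (by positivity)) (Real.log_le_sub_one_of_pos (by positivity))
  have hsum : ∑ i, Real.log (Q (ω i) / q (ω i)) ≤ r ^ 2 / M * ∑ x, (q x)⁻¹ := by
    refine (Finset.sum_le_sum fun i _ => hlog i).trans ?_
    rw [Finset.sum_add_distrib, hcomp (fun x => M * Q x / c x - 1), hcomp (fun x => c x / (M * q x) - 1)]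
    have s1 : ∑ x, c x * (M * Q x / c x - 1) ≤ 0 := by
      calc _ ≤ ∑ x, (M * Q x - c x) := by
            apply Finset.sum_le_sum
            intro x _
            rcases (hc0 x).eq_or_lt with h | h
            · rw [← h]; simp; exact mul_nonneg hMp.le (hQ.1 x)
            · apply le_of_eq; field_simp
        _ = 0 := by rw [Finset.sum_sub_distrib, ← Finset.mul_sum, hQ.2, hcs]; ring
    have s2 : ∑ x, c x * (c x / (M * q x) - 1) ≤ ∑ x, ((c x - M * q x) + r ^ 2 / M * (q x)⁻¹) := by
      apply Finset.sum_le_sum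
      intro x _
      rcases (hq.1 x).eq_or_lt with h | h
      · rw [hcq x h.symm, ← h]; simp
      · have hx := sq_le_sq' (abs_le.1 (hr x)).1 (abs_le.1 (hr x)).2
        have e : c x * (c x / (M * q x) - 1) = (c x - M * q x) + (c x - M * q x) ^ 2 / M * (q x)⁻¹ := by
          field_simp; ring
        rw [e]
        gcongr
    rw [Finset.sum_add_distrib, ← Finset.mul_sum, Finset.sum_sub_distrib, hcs, ← Finset.mul_sum, hq.2] at s2
    linarith
  have e : ∏ i, Q (ω i) = (∏ i, q (ω i)) * Real.exp (∑ i, Real.log (Q (ω i) / q (ω i))) := by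
    rw [Real.exp_sum, ← Finset.prod_mul_distrib]
    refine Finset.prod_congr rfl fun i _ => ?_
    have a := hz i; have b := hω i
    rw [Real.exp_log (by positivity)]; field_simp
  rw [e]
  exact mul_le_mul_of_nonneg_left (Real.exp_le_exp.2 hsum) hqp.le

open Classical in
lemma bad_prob {p : ι → X → ℝ} (hp : ∀ i, IsDist (p i)) (x : X) {M : ℝ} (hM : M = Fintype.card ι) (hM1 : 1 ≤ M) :
    Ex p (fun ω => if 2 * Real.sqrt (M * Real.log M) ≤ |∑ i, ((if ω i = x then (1:ℝ) else 0) - p i x)| then 1 else 0)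
      ≤ 2 / M := by
  have hl : 0 ≤ Real.log M := Real.log_nonneg hM1
  have hMp : 0 < M := by linarith
  set θ := Real.sqrt (Real.log M / M) with hθ
  have hθ0 : 0 ≤ θ := Real.sqrt_nonneg _
  have hθ2 : θ ^ 2 = Real.log M / M := Real.sq_sqrt (by positivity)
  have hθ1 : θ ≤ 1 := by
    apply Real.sqrt_le_one.2
    rw [div_le_one hMp]
    linarith [Real.log_le_sub_one_of_pos hMp]
  have hθs : θ * Real.sqrt (M * Real.log M) = Real.log M := by
    rw [hθ, ← Real.sqrt_mul (by positivity)]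
    have : Real.log M / M * (M * Real.log M) = Real.log M ^ 2 := by field_simp
    rw [this, Real.sqrt_sq hl]
  have hexp : Real.exp (θ ^ 2 * Fintype.card ι - θ * (2 * Real.sqrt (M * Real.log M))) = 1 / M := by
    have : θ ^ 2 * Fintype.card ι - θ * (2 * Real.sqrt (M * Real.log M)) = - Real.log M := by
      rw [← hM, hθ2]
      have : θ * (2 * Real.sqrt (M * Real.log M)) = 2 * Real.log M := by linarith
      rw [this]; field_simp; ring
    rw [this, Real.exp_neg, Real.exp_log hMp, one_div]
  set ξ : ι → X → ℝ := fun i y => (if y = x then (1:ℝ) else 0) - p i x with hξ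
  have hple : ∀ i, p i x ≤ 1 := fun i => by
    rw [← (hp i).2]; exact Finset.single_le_sum (fun y _ => (hp i).1 y) (Finset.mem_univ x)
  have hm : ∀ i, ∑ y, p i y * ξ i y = 0 := by
    intro i
    simp only [hξ, mul_sub, Finset.sum_sub_distrib, ← Finset.sum_mul, (hp i).2]
    simp
  have hb : ∀ i y, |ξ i y| ≤ 1 := by
    intro i y
    have := hple i; have := (hp i).1 x
    simp only [hξ]
    rw [abs_le]; split_ifs <;> constructor <;> linarith
  have t1 := tail_prob hp ξ hm hb hθ0 hθ1 (2 * Real.sqrt (M * Real.log M))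
  have t2 := tail_prob hp (fun i y => - ξ i y) (by simp [hm]) (by simpa using hb) hθ0 hθ1 (2 * Real.sqrt (M * Real.log M))
  rw [hexp] at t1 t2
  have : Ex p (fun ω => if 2 * Real.sqrt (M * Real.log M) ≤ |∑ i, ξ i (ω i)| then (1:ℝ) else 0) ≤
      Ex p (fun ω => (if 2 * Real.sqrt (M * Real.log M) ≤ ∑ i, ξ i (ω i) then (1:ℝ) else 0) +
        (if 2 * Real.sqrt (M * Real.log M) ≤ ∑ i, - ξ i (ω i) then (1:ℝ) else 0)) := by
    apply Ex_mono hp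
    intro ω
    rw [Finset.sum_neg_distrib]
    by_cases h : 2 * Real.sqrt (M * Real.log M) ≤ |∑ i, ξ i (ω i)|
    · rw [if_pos h]
      rcases le_abs.1 h with h | h
      · rw [if_pos h]; split_ifs <;> norm_num
      · rw [if_pos h]; split_ifs <;> norm_num
    · rw [if_neg h]; split_ifs <;> norm_num
  rw [Ex_add] at this
  calc _ ≤ _ := this
    _ ≤ 1 / M + 1 / M := add_le_add t1 t2
    _ = _ := by ring

open Classical in
lemma achieve {P1 P2 : X → ℝ} (h1 : IsDist P1) (h2 : IsDist P2) {α : ℝ} (hα : 0 < α) {N n : ℕ}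
    (hN : |(N:ℝ) - α * n| ≤ 1) (hM3 : 3 ≤ N + n) (u : ℝ) :
    Ex (pp P1 P2 N n) (fun ω => if ¬ (∀ Q : X → ℝ, IsDist Q → (∏ i, Q (ω i)) * Real.exp u ≤ ∏ i, pp P1 P2 N n i (ω i)) then 1 else 0)
    ≤ Ex (pp P1 P2 N n) (fun ω => if (∑ i, dd P1 P2 α N n i (ω i)) ≤
        u + 9 * (∑ x, (mix P1 P2 α x)⁻¹) * Real.log (N + n) then 1 else 0) + Fintype.card X * (2 / (N + n)) := by
  set M : ℝ := (N:ℝ) + n with hM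
  have hp := pp_dist h1 h2 N n
  have hM3' : (3:ℝ) ≤ M := by rw [hM]; exact_mod_cast hM3
  have hcard : M = Fintype.card (Fin N ⊕ Fin n) := by simp [hM]
  have : Nonempty (Fin N ⊕ Fin n) := by
    rw [← Fintype.card_pos_iff]; simp; omega
  set r := 2 * Real.sqrt (M * Real.log M) with hr
  have hlog1 : 1 ≤ Real.log M := by
    rw [Real.le_log_iff_exp_le (by linarith)]
    linarith [Real.exp_one_lt_d9]
  have hs1 : 1 ≤ Real.sqrt (M * Real.log M) := by
    rw [Real.one_le_sqrt]; nlinarith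
  have hs2 : Real.sqrt (M * Real.log M) ^ 2 = M * Real.log M := Real.sq_sqrt (by nlinarith)
  have hq := mix_dist h1 h2 hα
  calc _ ≤ Ex (pp P1 P2 N n) (fun ω => (if (∑ i, dd P1 P2 α N n i (ω i)) ≤
        u + 9 * (∑ x, (mix P1 P2 α x)⁻¹) * Real.log M then (1:ℝ) else 0) +
        ∑ x, (if r ≤ |∑ i, ((if ω i = x then (1:ℝ) else 0) - pp P1 P2 N n i x)| then (1:ℝ) else 0)) := by
        apply Ex_mono' hp
        intro ω hω
        have nn : ∀ x, (0:ℝ) ≤ (if r ≤ |∑ i, ((if ω i = x then (1:ℝ) else 0) - pp P1 P2 N n i x)| then (1:ℝ) else 0) :=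
          fun x => by split_ifs <;> norm_num
        by_cases hL : (∑ i, dd P1 P2 α N n i (ω i)) ≤ u + 9 * (∑ x, (mix P1 P2 α x)⁻¹) * Real.log M
        · rw [if_pos hL]
          have := Finset.sum_nonneg (s := Finset.univ) fun x _ => nn x
          split_ifs <;> linarith
        rw [if_neg hL, zero_add]
        by_cases hbad : ∃ x, r ≤ |∑ i, ((if ω i = x then (1:ℝ) else 0) - pp P1 P2 N n i x)|
        · obtain ⟨x, hx⟩ := hbad
          have := Finset.single_le_sum (f := fun x => (if r ≤ |∑ i, ((if ω i = x then (1:ℝ) else 0) - pp P1 P2 N n i x)| then (1:ℝ) else 0)) (fun x _ => nn x) (Finset.mem_univ x)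
          simp only [hx, if_true] at this
          refine le_trans ?_ this
          split_ifs <;> norm_num
        · push Not at hbad hL
          rw [if_neg]
          · exact Finset.sum_nonneg fun x _ => nn x
          rw [not_not]
          intro Q hQ
          have hg := gibbs (r := 3 * Real.sqrt (M * Real.log M)) hq hQ ω (fun i => (pp_eq h1 h2 hα i _ (hω i)).1) (by
            intro x
            have hb := hbad x
            rw [Finset.sum_sub_distrib] at hb
            have e : ∑ i, pp P1 P2 N n i x = N * P1 x + n * P2 x := by
              simp [Fintype.sum_sum_type, pp]
            rw [e] at hb
            have e2 : N * P1 x + n * P2 x - M * mix P1 P2 α x = (N - α * n) * ((P1 x - P2 x) / (1 + α)) := by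
              rw [hM]; unfold mix; field_simp; ring
            have p1 : P1 x ≤ 1 := by
              rw [← h1.2]; exact Finset.single_le_sum (fun y _ => h1.1 y) (Finset.mem_univ x)
            have p2 : P2 x ≤ 1 := by
              rw [← h2.2]; exact Finset.single_le_sum (fun y _ => h2.1 y) (Finset.mem_univ x)
            have p3 : |(P1 x - P2 x) / (1 + α)| ≤ 1 := by
              rw [abs_div, abs_of_pos (show 0 < 1 + α by linarith), div_le_one (by linarith), abs_le]
              constructor <;> linarith [h1.1 x, h2.1 x]
            have e3 : |N * P1 x + n * P2 x - M * mix P1 P2 α x| ≤ 1 := by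
              rw [e2, abs_mul]; exact mul_le_one₀ hN (abs_nonneg _) p3
            rw [← hcard]
            have := abs_add_le ((∑ i, if ω i = x then (1:ℝ) else 0) - (N * P1 x + n * P2 x)) (N * P1 x + n * P2 x - M * mix P1 P2 α x)
            rw [sub_add_sub_cancel] at this
            linarith)
          rw [← hcard, mul_pow, hs2] at hg
          have e4 : (3:ℝ) ^ 2 * (M * Real.log M) / M = 9 * Real.log M := by
            field_simp; norm_num
          rw [e4] at hg
          rw [wt_eq h1 h2 hα ω hω]
          calc _ ≤ (∏ i, mix P1 P2 α (ω i)) * Real.exp (9 * Real.log M * ∑ x, (mix P1 P2 α x)⁻¹) * Real.exp u :=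
                mul_le_mul_of_nonneg_right hg (Real.exp_pos _).le
            _ ≤ _ := by
              rw [mul_assoc, ← Real.exp_add]
              apply mul_le_mul_of_nonneg_left _ (Finset.prod_nonneg fun i _ => hq.1 _)
              apply Real.exp_le_exp.2
              linarith
    _ ≤ _ := by
        rw [Ex_add, Ex_sum]
        apply add_le_add le_rfl
        calc _ ≤ ∑ _x : X, 2 / M := Finset.sum_le_sum fun x _ => bad_prob hp x hcard (by linarith)
          _ = _ := by simp

open Classical in
lemma LBE {P1 P2 : X → ℝ} (h1 : IsDist P1) (h2 : IsDist P2) (α : ℝ) (N n : ℕ) {B s : ℝ}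
    (hB : 0 < B) (hBs : B ≤ s)
    (hB1 : ∀ x, |iDens1 P1 P2 α x - expect P1 (iDens1 P1 P2 α)| ≤ B)
    (hB2 : ∀ x, |iDens2 P1 P2 α x - expect P2 (iDens2 P1 P2 α)| ≤ B)
    (hs : s ^ 2 = N * varD P1 (iDens1 P1 P2 α) + n * varD P2 (iDens2 P1 P2 α)) (z : ℝ) :
    stdCDF z - 25 * (B / s) ≤ Ex (pp P1 P2 N n) (fun ω => if (∑ i, dd P1 P2 α N n i (ω i)) <
      N * expect P1 (iDens1 P1 P2 α) + n * expect P2 (iDens2 P1 P2 α) + s * z then 1 else 0) ∧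
    Ex (pp P1 P2 N n) (fun ω => if (∑ i, dd P1 P2 α N n i (ω i)) ≤
      N * expect P1 (iDens1 P1 P2 α) + n * expect P2 (iDens2 P1 P2 α) + s * z then 1 else 0) ≤
      stdCDF z + 25 * (B / s) := by
  have hsp : 0 < s := by linarith
  set a1 := expect P1 (iDens1 P1 P2 α) with ha1
  set a2 := expect P2 (iDens2 P1 P2 α) with ha2
  set ξ : Fin N ⊕ Fin n → X → ℝ := fun i x => (dd P1 P2 α N n i x - Sum.elim (fun _ => a1) (fun _ => a2) i) / s with hξ
  have hp := pp_dist h1 h2 N n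
  have hm : ∀ i, ∑ x, pp P1 P2 N n i x * ξ i x = 0 := by
    intro i
    have : ∀ x, pp P1 P2 N n i x * ξ i x = (pp P1 P2 N n i x * dd P1 P2 α N n i x - pp P1 P2 N n i x * Sum.elim (fun _ => a1) (fun _ => a2) i) / s := by
      intro x; simp only [hξ]; ring
    simp only [this, ← Finset.sum_div, Finset.sum_sub_distrib, ← Finset.sum_mul, (hp i).2]
    cases i with
    | inl i => simp [pp, dd, ha1, expect]
    | inr i => simp [pp, dd, ha2, expect]
  have hs' : ∑ i, ∑ x, pp P1 P2 N n i x * ξ i x ^ 2 = 1 := by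
    have : ∀ i x, pp P1 P2 N n i x * ξ i x ^ 2 = (pp P1 P2 N n i x * (dd P1 P2 α N n i x - Sum.elim (fun _ => a1) (fun _ => a2) i) ^ 2) / s ^ 2 := by
      intro i x; simp only [hξ]; ring
    simp only [this, ← Finset.sum_div]
    rw [div_eq_one_iff_eq (by positivity), hs]
    simp [Fintype.sum_sum_type, pp, dd, varD, expect, ha1, ha2]
  have hb : ∀ i x, |ξ i x| ≤ B / s := by
    intro i x
    simp only [hξ]
    rw [abs_div, abs_of_pos hsp]
    apply div_le_div_of_nonneg_right _ hsp.le
    cases i with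
    | inl i => exact hB1 x
    | inr i => exact hB2 x
  have hδ0 : 0 < B / s := by positivity
  have hδ1 : B / s ≤ 1 := by rw [div_le_one hsp]; exact hBs
  have hsum : ∀ ω : Fin N ⊕ Fin n → X, ∑ i, ξ i (ω i) = ((∑ i, dd P1 P2 α N n i (ω i)) - (N * a1 + n * a2)) / s := by
    intro ω
    simp only [hξ, ← Finset.sum_div, Finset.sum_sub_distrib]
    simp [Fintype.sum_sum_type]
  have l := be_lower hp ξ hm hs' hδ0 hδ1 hb z
  have u := be_upper hp ξ hm hs' hδ0 hδ1 hb z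
  have e1 : ∀ ω : Fin N ⊕ Fin n → X, (∑ i, ξ i (ω i) < z ↔ (∑ i, dd P1 P2 α N n i (ω i)) < N * a1 + n * a2 + s * z) := by
    intro ω
    rw [hsum, div_lt_iff₀ hsp, mul_comm z s]
    constructor <;> intro h <;> linarith
  have e2 : ∀ ω : Fin N ⊕ Fin n → X, (∑ i, ξ i (ω i) ≤ z ↔ (∑ i, dd P1 P2 α N n i (ω i)) ≤ N * a1 + n * a2 + s * z) := by
    intro ω
    rw [hsum, div_le_iff₀ hsp, mul_comm z s]
    constructor <;> intro h <;> linarith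
  simp only [e1] at l
  simp only [e2] at u
  exact ⟨l, u⟩
end C


section D

open Classical in
lemma fa_conv {α : ℝ} {n : ℕ} (φ : TTest X α n) (Q : X → ℝ) :
    betaFA φ Q = Ex (pp Q Q (trainLen α n) n) (fun ω => if φ (fun i => ω (Sum.inl i)) (fun i => ω (Sum.inr i)) = true then 1 else 0) := by
  unfold betaFA
  rw [sum_conv Q Q (trainLen α n) n (fun x y => φ x y = true)]

open Classical in
lemma md_conv {α : ℝ} {n : ℕ} (φ : TTest X α n) (P1 P2 : X → ℝ) :
    betaMD φ P1 P2 = Ex (pp P1 P2 (trainLen α n) n) (fun ω => if ¬ φ (fun i => ω (Sum.inl i)) (fun i => ω (Sum.inr i)) = true then 1 else 0) := by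
  unfold betaMD
  rw [sum_conv P1 P2 (trainLen α n) n (fun x y => φ x y = false)]
  simp only [Bool.not_eq_true]

open Classical in
lemma conv_bd {P1 P2 : X → ℝ} (h1 : IsDist P1) (h2 : IsDist P2) {α ε : ℝ} (hα : 0 < α) {n : ℕ} {lam : ℝ}
    (φ : TTest X α n) (hFA : ∀ Q1 : X → ℝ, IsDist Q1 → betaFA φ Q1 ≤ Real.exp (-((n : ℝ) * lam)))
    (hMD : betaMD φ P1 P2 ≤ ε) (t : ℝ) :
    Ex (pp P1 P2 (trainLen α n) n) (fun ω => if (∑ i, dd P1 P2 α (trainLen α n) n i (ω i)) < t then 1 else 0) ≤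
      ε + Real.exp (t - n * lam) := by
  have h := converse h1 h2 hα (N := trainLen α n) (n := n) (fun ω => φ (fun i => ω (Sum.inl i)) (fun i => ω (Sum.inr i)) = true) t
  have e1 : betaMD φ P1 P2 = Ex (pp P1 P2 (trainLen α n) n) (fun ω => if ¬ (fun ω : Fin (trainLen α n) ⊕ Fin n → X => φ (fun i => ω (Sum.inl i)) (fun i => ω (Sum.inr i)) = true) ω then 1 else 0) := by
    rw [md_conv]
  have e2 : betaFA φ (mix P1 P2 α) = Ex (pp (mix P1 P2 α) (mix P1 P2 α) (trainLen α n) n) (fun ω => if (fun ω : Fin (trainLen α n) ⊕ Fin n → X => φ (fun i => ω (Sum.inl i)) (fun i => ω (Sum.inr i)) = true) ω then 1 else 0) := by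
    rw [fa_conv]
  have h' : Ex (pp P1 P2 (trainLen α n) n) (fun ω => if (∑ i, dd P1 P2 α (trainLen α n) n i (ω i)) < t then 1 else 0) ≤ betaMD φ P1 P2 + Real.exp t * betaFA φ (mix P1 P2 α) := by
    rw [e1, e2]; convert h
  have := mul_le_mul_of_nonneg_left (hFA _ (mix_dist h1 h2 hα)) (Real.exp_pos t).le
  rw [← Real.exp_add, ← sub_eq_add_neg] at this
  linarith

open Classical in
lemma ach_bd {P1 P2 : X → ℝ} (h1 : IsDist P1) (h2 : IsDist P2) {α : ℝ} {n : ℕ} {lam ε : ℝ}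
    (h : Ex (pp P1 P2 (trainLen α n) n) (fun ω => if ¬ (∀ Q : X → ℝ, IsDist Q → (∏ i, Q (ω i)) * Real.exp (n * lam) ≤ ∏ i, pp P1 P2 (trainLen α n) n i (ω i)) then 1 else 0) ≤ ε) :
    ∃ φ : TTest X α n, (∀ Q1 : X → ℝ, IsDist Q1 → betaFA φ Q1 ≤ Real.exp (-((n : ℝ) * lam))) ∧ betaMD φ P1 P2 ≤ ε := by
  set S : (Fin (trainLen α n) ⊕ Fin n → X) → Prop := fun ω =>
    ∀ Q : X → ℝ, IsDist Q → (∏ i, Q (ω i)) * Real.exp (n * lam) ≤ ∏ i, pp P1 P2 (trainLen α n) n i (ω i) with hS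
  have hel : ∀ ω : Fin (trainLen α n) ⊕ Fin n → X, Sum.elim (fun i => ω (Sum.inl i)) (fun i => ω (Sum.inr i)) = ω :=
    fun ω => Sum.elim_comp_inl_inr ω
  refine ⟨fun x y => decide (S (Sum.elim x y)), ?_, ?_⟩
  · intro Q hQ
    rw [fa_conv]
    simp only [hel, decide_eq_true_eq]
    unfold Ex
    simp only [pp_self]
    calc _ ≤ ∑ ω : Fin (trainLen α n) ⊕ Fin n → X, Real.exp (-((n : ℝ) * lam)) * ∏ i, pp P1 P2 (trainLen α n) n i (ω i) := by
          apply Finset.sum_le_sum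
          intro ω _
          split_ifs with hs
          · rw [mul_one, Real.exp_neg, le_inv_mul_iff₀ (Real.exp_pos _), mul_comm]
            exact hs Q hQ
          · rw [mul_zero]
            exact mul_nonneg (Real.exp_pos _).le (wt_nonneg (pp_dist h1 h2 _ _) ω)
      _ = _ := by rw [← Finset.mul_sum, Ex_one (pp_dist h1 h2 _ _), mul_one]
  · rw [md_conv]
    simp only [hel, decide_eq_true_eq]
    exact h

lemma varD_nonneg {P : X → ℝ} (h : IsDist P) (f : X → ℝ) : 0 ≤ varD P f :=
  Finset.sum_nonneg fun x _ => mul_nonneg (h.1 x) (sq_nonneg _)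

set_option maxHeartbeats 2000000 in
lemma main_aux {X : Type*} [Fintype X] [DecidableEq X]
    (α ε : ℝ) (hα : 0 < α) (hε : ε ∈ Set.Ioo (0 : ℝ) 1)
    (P1 P2 : X → ℝ) (h1 : IsDist P1) (h2 : IsDist P2)
    (hV : 0 < disp P1 P2 α) :
    ∃ C > (0 : ℝ), ∃ n0 : ℕ, ∀ n ≥ n0,
      |xiStar α n ε P1 P2 - GJS P1 P2 α -
        Real.sqrt (disp P1 P2 α / n) * stdCDFInv ε| ≤ C * Real.log n / n := by
  classical
  set V := disp P1 P2 α with hVdef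
  set z := stdCDFInv ε with hz
  set a1 := expect P1 (iDens1 P1 P2 α) with ha1
  set a2 := expect P2 (iDens2 P1 P2 α) with ha2
  set v1 := varD P1 (iDens1 P1 P2 α) with hv1
  set v2 := varD P2 (iDens2 P1 P2 α) with hv2
  have hv10 : 0 ≤ v1 := varD_nonneg h1 _
  have hv20 : 0 ≤ v2 := varD_nonneg h2 _
  have hVe : V = α * v1 + v2 := rfl
  have hGe : GJS P1 P2 α = α * a1 + a2 := GJS_eq P1 P2 α
  set B : ℝ := 1 + ∑ x, (|iDens1 P1 P2 α x - a1| + |iDens2 P1 P2 α x - a2|) with hB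
  have hBnn : ∀ x ∈ Finset.univ, 0 ≤ |iDens1 P1 P2 α x - a1| + |iDens2 P1 P2 α x - a2| := fun x _ => by positivity
  have hB0 : 0 < B := by have := Finset.sum_nonneg hBnn; linarith
  have hBx : ∀ x, |iDens1 P1 P2 α x - a1| + |iDens2 P1 P2 α x - a2| ≤ B := fun x => by
    have := Finset.single_le_sum hBnn (Finset.mem_univ x); linarith
  have hB1 : ∀ x, |iDens1 P1 P2 α x - a1| ≤ B := fun x => by
    linarith [hBx x, abs_nonneg (iDens2 P1 P2 α x - a2)]
  have hB2 : ∀ x, |iDens2 P1 P2 α x - a2| ≤ B := fun x => by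
    linarith [hBx x, abs_nonneg (iDens1 P1 P2 α x - a1)]
  obtain ⟨c, hc, hspec⟩ := stdCDFInv_spec hε
  rw [← hz] at hspec
  set sV := Real.sqrt V with hsV
  have hsV0 : 0 < sV := Real.sqrt_pos.2 hV
  have hsV2 : sV ^ 2 = V := Real.sq_sqrt hV.le
  set K0 : ℝ := 2 + 25 * (B / sV) + 2 * Fintype.card X with hK0
  have hK00 : 0 < K0 := by positivity
  set D : ℝ := 9 * (∑ x, (mix P1 P2 α x)⁻¹) with hD
  have hD0 : 0 ≤ D := by
    have : 0 ≤ ∑ x, (mix P1 P2 α x)⁻¹ := Finset.sum_nonneg fun x _ => inv_nonneg.2 ((mix_dist h1 h2 hα).1 x)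
    positivity
  set K1 : ℝ := (sV + v1) * (K0 / c) with hK1
  have hK10 : 0 ≤ K1 := by positivity
  have hlα : 0 ≤ Real.log (α + 2) := Real.log_nonneg (by linarith)
  set T : ℝ := B / sV + 1 / sV + K0 / c with hT
  have hT0 : 0 ≤ T := by positivity
  refine ⟨1/2 + |a1| + v1 * |z| + K1 + D * (1 + Real.log (α + 2)), by positivity, ⌈T ^ 2⌉₊ + 3, ?_⟩
  intro n hn
  have hn3 : 3 ≤ n := by omega
  have hn3' : (3:ℝ) ≤ n := by exact_mod_cast hn3
  have hnp : (0:ℝ) < n := by linarith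
  set rn := Real.sqrt n with hrn
  have hrn2 : rn ^ 2 = n := Real.sq_sqrt hnp.le
  have hrn1 : 1 ≤ rn := Real.one_le_sqrt.2 (by linarith)
  have hrn0 : 0 < rn := by linarith
  have hrT : T ≤ rn := by
    apply Real.le_sqrt_of_sq_le
    calc T ^ 2 ≤ ⌈T ^ 2⌉₊ := Nat.le_ceil _
      _ ≤ n := by exact_mod_cast (by omega)
  have hlog1 : 1 ≤ Real.log n := by
    rw [Real.le_log_iff_exp_le hnp]; linarith [Real.exp_one_lt_d9]
  set R := rn * sV with hR
  have hRB : B ≤ R := by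
    have : B / sV ≤ rn := by
      have : 0 ≤ 1 / sV + K0 / c := by positivity
      linarith
    rwa [div_le_iff₀ hsV0] at this
  have hR1 : 1 ≤ R := by
    have : 1 / sV ≤ rn := by
      have : 0 ≤ B / sV + K0 / c := by positivity
      linarith
    rwa [div_le_iff₀ hsV0] at this
  set d := K0 / c / rn with hd
  have hd0 : 0 ≤ d := by positivity
  have hd1 : d ≤ 1 := by
    rw [hd, div_le_one hrn0]
    have : 0 ≤ B / sV + 1 / sV := by positivity
    linarith
  have hcd : c * d = K0 / rn := by rw [hd]; field_simp
  have hR2 : R ^ 2 = n * V := by rw [hR, mul_pow, hrn2, hsV2]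
  have hsq : Real.sqrt (V / n) = R / n := by
    rw [Real.sqrt_div hV.le, hR, ← hrn2, ← hsV, hrn2, ← hrn]
    rw [← hrn2]; field_simp
  -- N
  set N := trainLen α n with hN
  have hN1 : α * n ≤ N := Nat.le_ceil _
  have hN2 : (N:ℝ) < α * n + 1 := Nat.ceil_lt_add_one (by positivity)
  set s := Real.sqrt (N * v1 + n * v2) with hs
  have hs2 : s ^ 2 = N * v1 + n * v2 := Real.sq_sqrt (by positivity)
  have hs0 : 0 ≤ s := Real.sqrt_nonneg _
  have hsR : R ≤ s := by
    apply Real.le_sqrt_of_sq_le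
    rw [hR2, hVe]
    have := mul_le_mul_of_nonneg_right hN1 hv10
    calc (n:ℝ) * (α * v1 + v2) = α * n * v1 + n * v2 := by ring
      _ ≤ _ := by linarith
  have hsR2 : s ≤ R + v1 := by
    apply Real.sqrt_le_iff.2
    refine ⟨by positivity, ?_⟩
    have : N * v1 ≤ (α * n + 1) * v1 := mul_le_mul_of_nonneg_right hN2.le hv10
    have e : (R + v1) ^ 2 = n * (α * v1 + v2) + 2 * (R * v1) + v1 ^ 2 := by
      rw [← hVe, ← hR2]; ring
    have e2 : v1 ≤ R * v1 := le_mul_of_one_le_left hv10 hR1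
    have e3 := sq_nonneg v1
    rw [e]
    have e4 : (α * n + 1) * v1 + n * v2 = n * (α * v1 + v2) + v1 := by ring
    linarith
  have hsp : 0 < s := by linarith
  have hμ : |(N * a1 + n * a2) - n * (α * a1 + a2)| ≤ |a1| := by
    have : (N * a1 + n * a2) - n * (α * a1 + a2) = (N - α * n) * a1 := by ring
    rw [this, abs_mul]
    apply mul_le_of_le_one_left (abs_nonneg _)
    rw [abs_le]; constructor <;> linarith
  set μ := N * a1 + n * a2 with hμdef
  have hμ' := abs_le.1 hμ
  have hLBE := LBE h1 h2 α N n (s := s) hB0 (hRB.trans hsR) hB1 hB2 hs2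
  have hBs : B / s ≤ B / sV / rn := by
    rw [div_div, mul_comm sV]
    exact div_le_div_of_nonneg_left hB0.le (by positivity) hsR
  have hsz : |s * z - R * z| ≤ v1 * |z| := by
    rw [← sub_mul, abs_mul]
    apply mul_le_mul_of_nonneg_right _ (abs_nonneg _)
    rw [abs_le]; constructor <;> linarith
  have hsz' := abs_le.1 hsz
  have hsd : s * d ≤ K1 := by
    calc s * d ≤ (R + v1) * d := mul_le_mul_of_nonneg_right hsR2 hd0
      _ = (sV + v1 / rn) * (K0 / c) := by rw [hd, hR]; field_simp
      _ ≤ K1 := by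
        apply mul_le_mul_of_nonneg_right _ (by positivity)
        have : v1 / rn ≤ v1 := div_le_self hv10 hrn1
        linarith
  have hsd0 : 0 ≤ s * d := by positivity
  -- converse
  have hconv : ∀ lam ∈ {lam : ℝ | 0 ≤ lam ∧ ∃ φ : TTest X α n,
    (∀ Q1 : X → ℝ, IsDist Q1 → betaFA φ Q1 ≤ Real.exp (-((n : ℝ) * lam))) ∧
    betaMD φ P1 P2 ≤ ε}, lam ≤ (1/2 * Real.log n + μ + s * (z + d)) / n := by
    rintro lam ⟨-, φ, hFA, hMD⟩
    rw [le_div_iff₀ hnp]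
    by_contra! hcon
    have hb := conv_bd h1 h2 hα φ hFA hMD (μ + s * (z + d))
    have hl := (hLBE (z + d)).1
    have hsp2 := (hspec d hd0 hd1).1
    have hexp : Real.exp (μ + s * (z + d) - n * lam) ≤ 1 / rn := by
      have : Real.exp (-(1/2 * Real.log n)) = 1 / rn := by
        rw [Real.exp_neg, one_div, hrn, Real.sqrt_eq_rpow, Real.rpow_def_of_pos hnp]
        congr 2; ring
      rw [← this]
      apply Real.exp_le_exp.2
      linarith
    rw [hcd] at hsp2
    have e : K0 / rn = 2 * (1 / rn) + 25 * (B / sV / rn) + 2 * Fintype.card X / rn := by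
      rw [hK0]; ring
    have p1 : 0 < 1 / rn := by positivity
    have p2 : 0 ≤ 2 * (Fintype.card X : ℝ) / rn := by positivity
    linarith
  have hne : (0:ℝ) ∈ {lam : ℝ | 0 ≤ lam ∧ ∃ φ : TTest X α n,
    (∀ Q1 : X → ℝ, IsDist Q1 → betaFA φ Q1 ≤ Real.exp (-((n : ℝ) * lam))) ∧
    betaMD φ P1 P2 ≤ ε} := by
    refine ⟨le_rfl, fun _ _ => true, ?_, ?_⟩
    · intro Q hQ
      rw [fa_conv]
      simp only [if_true, mul_zero, neg_zero, Real.exp_zero]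
      rw [Ex_const (pp_dist hQ hQ _ _)]
    · unfold betaMD; simp [hε.1.le]
  have hbdd : BddAbove {lam : ℝ | 0 ≤ lam ∧ ∃ φ : TTest X α n,
    (∀ Q1 : X → ℝ, IsDist Q1 → betaFA φ Q1 ≤ Real.exp (-((n : ℝ) * lam))) ∧
    betaMD φ P1 P2 ≤ ε} := ⟨_, hconv⟩
  have hup : xiStar α n ε P1 P2 ≤ (1/2 * Real.log n + μ + s * (z + d)) / n := csSup_le ⟨0, hne⟩ hconv
  have hlow : (μ + s * (z - d) - D * Real.log (N + n)) / n ≤ xiStar α n ε P1 P2 := by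
    set lam := (μ + s * (z - d) - D * Real.log (N + n)) / n with hlam
    rcases lt_or_ge lam 0 with hneg | hpos
    · exact hneg.le.trans (le_csSup hbdd hne)
    · apply le_csSup hbdd
      refine ⟨hpos, ach_bd h1 h2 ?_⟩
      have hnl : n * lam = μ + s * (z - d) - D * Real.log (N + n) := by rw [hlam]; field_simp
      have hach := achieve h1 h2 hα (N := N) (n := n) (by rw [abs_le]; constructor <;> linarith) (by omega) (n * lam)
      refine hach.trans ?_
      have hu := (hLBE (z - d)).2
      have hsp2 := (hspec d hd0 hd1).2
      rw [← hD, hnl, sub_add_cancel]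
      rw [hcd] at hsp2
      have e : K0 / rn = 2 * (1 / rn) + 25 * (B / sV / rn) + 2 * Fintype.card X / rn := by
        rw [hK0]; ring
      have p1 : 0 < 1 / rn := by positivity
      have p2 : (Fintype.card X : ℝ) * (2 / (N + n)) ≤ 2 * Fintype.card X / rn := by
        rw [mul_div_assoc', mul_comm]
        apply div_le_div_of_nonneg_left (by positivity) hrn0
        have h0 : (0:ℝ) ≤ N := by positivity
        have h1 : rn ≤ rn ^ 2 := by rw [sq]; exact le_mul_of_one_le_left hrn0.le hrn1
        linarith
      linarith
  have hlogN : Real.log (N + n) ≤ Real.log (α + 2) + Real.log n := by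
    rw [← Real.log_mul (by positivity) (by positivity)]
    apply Real.log_le_log (by positivity)
    linarith
  rw [hsq, hGe]
  have hfin : xiStar α n ε P1 P2 - (α * a1 + a2) - R / n * z =
      (n * xiStar α n ε P1 P2 - n * (α * a1 + a2) - R * z) / n := by field_simp
  rw [hfin, abs_div, abs_of_pos hnp]
  apply div_le_div_of_nonneg_right _ hnp.le
  rw [le_div_iff₀ hnp] at hup
  rw [div_le_iff₀ hnp] at hlow
  have q1 : |a1| ≤ |a1| * Real.log n := le_mul_of_one_le_right (abs_nonneg _) hlog1
  have q2 : v1 * |z| ≤ v1 * |z| * Real.log n := le_mul_of_one_le_right (by positivity) hlog1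
  have q3 : K1 ≤ K1 * Real.log n := le_mul_of_one_le_right hK10 hlog1
  have q4 : D * Real.log (N + n) ≤ D * (1 + Real.log (α + 2)) * Real.log n := by
    rw [mul_assoc D (1 + Real.log (α + 2)) (Real.log n)]
    apply mul_le_mul_of_nonneg_left _ hD0
    have := le_mul_of_one_le_right hlα hlog1
    rw [add_mul, one_mul]
    linarith
  have q5 : 0 ≤ D * (1 + Real.log (α + 2)) * Real.log n := by positivity
  rw [abs_le]
  constructor
  · linarith
  · linarith
end D

/-- Corollary 1 of the paper: second-order asymptotics of two-sample
homogeneity testing: `ξ*(n,α,ε|P1,P2) = GJS(P1,P2,α) + sqrt(V(P1,P2,α)/n) Φ⁻¹(ε) + O(log n/n)`. -/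
theorem xiStar_second_order {X : Type*} [Fintype X] [DecidableEq X]
    (α ε : ℝ) (hα : 0 < α) (hε : ε ∈ Set.Ioo (0 : ℝ) 1)
    (P1 P2 : X → ℝ) (h1 : IsDist P1) (h2 : IsDist P2)
    (hV : 0 < disp P1 P2 α) :
    ∃ C > (0 : ℝ), ∃ n0 : ℕ, ∀ n ≥ n0,
      |xiStar α n ε P1 P2 - GJS P1 P2 α -
        Real.sqrt (disp P1 P2 α / n) * stdCDFInv ε| ≤ C * Real.log n / n := by
  exact main_aux α ε hα hε P1 P2 h1 h2 hV

end Classification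
end

section
/- For any ε ∈ (0,1), any α > 0 and any pair of distributions (P1,P2) with full support on a finite alphabet X, lim_{n→∞} τ*(n,α,ε|φ_n^Gut,P1,P2) = D_{α/(1+α)}(P1‖P2). -/
open Filter Topology MeasureTheory

namespace Classification

variable {X : Type*} [Fintype X] [DecidableEq X]

set_option linter.unusedSectionVars false
set_option linter.unusedVariables false

lemma seqProb_nonneg {P : X → ℝ} (hP : ∀ x, 0 ≤ P x) {m : ℕ} (x : Fin m → X) :
    0 ≤ seqProb P x := Finset.prod_nonneg fun i _ => hP _

lemma sum_seqProb {P : X → ℝ} (hP : IsDist P) (m : ℕ) :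
    ∑ x : Fin m → X, seqProb P x = 1 := by
  unfold seqProb
  rw [← Fintype.sum_pow, hP.2, one_pow]

lemma sum_eq_emp {m : ℕ} (hm : 0 < m) (x : Fin m → X) (f : X → ℝ) :
    ∑ i, f (x i) = m * ∑ a, empDist x a * f a := by
  rw [← Finset.sum_fiberwise Finset.univ x, Finset.mul_sum]
  refine Finset.sum_congr rfl fun a _ => ?_
  have hm' : (m : ℝ) ≠ 0 := by positivity
  rw [Finset.sum_congr rfl (g := fun _ => f a)]
  · simp only [empDist, Finset.sum_const, nsmul_eq_mul]
    field_simp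
  · intro i hi
    rw [(Finset.mem_filter.mp hi).2]

lemma isDist_emp {m : ℕ} (hm : 0 < m) (x : Fin m → X) : IsDist (empDist x) := by
  refine ⟨fun a => by unfold empDist; positivity, ?_⟩
  have h := sum_eq_emp hm x (fun _ => (1 : ℝ))
  have hm' : (m : ℝ) ≠ 0 := by positivity
  simp only [Finset.sum_const, Finset.card_univ, Fintype.card_fin, nsmul_eq_mul, mul_one] at h
  exact mul_left_cancel₀ hm' (by rw [← h, mul_one])

lemma emp_pos_iff {m : ℕ} (hm : 0 < m) (x : Fin m → X) (i : Fin m) : 0 < empDist x (x i) := by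
  unfold empDist
  have : 0 < (Finset.univ.filter fun j => x j = x i).card :=
    Finset.card_pos.mpr ⟨i, by simp⟩
  positivity

lemma emp_eq_zero {m : ℕ} (x : Fin m → X) (a : X) (h : ∀ i, x i ≠ a) : empDist x a = 0 := by
  simp [empDist, h]

lemma seqProb_eq_exp {m : ℕ} (hm : 0 < m) (x : Fin m → X) {P : X → ℝ} (hP : ∀ i, 0 < P (x i)) :
    seqProb P x = Real.exp (m * ∑ a, empDist x a * Real.log (P a)) := by
  rw [← sum_eq_emp hm x (fun a => Real.log (P a)), Real.exp_sum]
  exact Finset.prod_congr rfl fun i _ => (Real.exp_log (hP i)).symm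

lemma seqProb_eq_kl {m : ℕ} (hm : 0 < m) (x : Fin m → X) {P : X → ℝ} (hP : ∀ i, 0 < P (x i)) :
    seqProb P x = seqProb (empDist x) x * Real.exp (-(m * klDivR (empDist x) P)) := by
  rw [seqProb_eq_exp hm x hP, seqProb_eq_exp hm x (emp_pos_iff hm x), ← Real.exp_add]
  congr 1
  rw [← sub_eq_add_neg, ← mul_sub]
  congr 1
  unfold klDivR
  rw [← Finset.sum_sub_distrib]
  refine Finset.sum_congr rfl fun a _ => ?_
  by_cases h : ∃ i, x i = a
  · obtain ⟨i, rfl⟩ := h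
    rw [Real.log_div (emp_pos_iff hm x i).ne' (hP i).ne']
    ring
  · push Not at h
    simp [emp_eq_zero x a h]

lemma sum_seqProb_emp_le {m : ℕ} (hm : 0 < m) :
    ∑ x : Fin m → X, seqProb (empDist x) x ≤ ((m : ℝ) + 1) ^ Fintype.card X := by
  classical
  let c : (Fin m → X) → (X → Fin (m + 1)) := fun x a =>
    ⟨(Finset.univ.filter fun i => x i = a).card,
      Nat.lt_succ_of_le ((Finset.card_le_univ _).trans (by simp))⟩
  rw [← Finset.sum_fiberwise Finset.univ c]
  have : ∀ k : X → Fin (m + 1),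
      ∑ x ∈ Finset.univ.filter (fun x => c x = k), seqProb (empDist x) x ≤ 1 := by
    intro k
    by_cases h : ∃ x0, c x0 = k
    · obtain ⟨x0, rfl⟩ := h
      have hd := isDist_emp hm x0
      rw [← sum_seqProb hd m]
      calc _ = ∑ x ∈ Finset.univ.filter (fun x => c x = c x0), seqProb (empDist x0) x := by
            refine Finset.sum_congr rfl fun x hx => ?_
            have hx := (Finset.mem_filter.mp hx).2
            have : empDist x = empDist x0 := by
              funext a
              have := congrArg Fin.val (congrFun hx a)
              simp only [c] at this
              simp only [empDist, this]
            rw [this]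
        _ ≤ _ := Finset.sum_le_sum_of_subset_of_nonneg (Finset.filter_subset _ _)
            fun x _ _ => seqProb_nonneg hd.1 x
    · push Not at h
      rw [Finset.sum_eq_zero]
      · norm_num
      · intro x hx
        exact absurd (Finset.mem_filter.mp hx).2 (h x)
  calc _ ≤ ∑ k : X → Fin (m + 1), (1 : ℝ) := Finset.sum_le_sum fun k _ => this k
    _ = _ := by simp

lemma kl_term {q p : ℝ} (hq : 0 ≤ q) (hp : 0 ≤ p) (h : p = 0 → q = 0) :
    (√q - √p) ^ 2 + (q - p) ≤ q * Real.log (q / p) := by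
  rcases hq.eq_or_lt with rfl | hq
  · simp [Real.sq_sqrt hp]
  have hp : 0 < p := lt_of_le_of_ne hp fun h0 => hq.ne' (h h0.symm)
  have h1 := Real.log_le_sub_one_of_pos (show 0 < √p / √q by positivity)
  have h2 : Real.log (q / p) = -2 * Real.log (√p / √q) := by
    rw [Real.log_div (by positivity) (by positivity), Real.log_div (by positivity) (by positivity),
      Real.log_sqrt hp.le, Real.log_sqrt hq.le]
    ring
  rw [h2]
  have h3 : q * (√p / √q) = √q * √p := by
    have := Real.mul_self_sqrt hq.le
    have h4 : √q ≠ 0 := by positivity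
    field_simp
    nlinarith
  nlinarith [Real.sq_sqrt hq.le, Real.sq_sqrt hp.le, mul_le_mul_of_nonneg_left h1 hq.le]

lemma kl_hell {Q P : X → ℝ} (hQ : IsDist Q) (hP : IsDist P) (h : ∀ x, P x = 0 → Q x = 0) :
    ∑ x, (√(Q x) - √(P x)) ^ 2 ≤ klDivR Q P := by
  have := Finset.sum_le_sum (s := Finset.univ) fun x _ => kl_term (hQ.1 x) (hP.1 x) (h x)
  rw [Finset.sum_add_distrib, Finset.sum_sub_distrib, hQ.2, hP.2] at this
  simpa [klDivR] using this

lemma kl_nonneg {Q P : X → ℝ} (hQ : IsDist Q) (hP : IsDist P) (h : ∀ x, P x = 0 → Q x = 0) :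
    0 ≤ klDivR Q P :=
  (Finset.sum_nonneg fun x _ => sq_nonneg _).trans (kl_hell hQ hP h)

lemma IsDist.le_one {Q : X → ℝ} (hQ : IsDist Q) (x : X) : Q x ≤ 1 := by
  rw [← hQ.2]
  exact Finset.single_le_sum (fun y _ => hQ.1 y) (Finset.mem_univ x)

lemma abs_sub_le {Q P : X → ℝ} (hQ : IsDist Q) (hP : IsDist P) (h : ∀ x, P x = 0 → Q x = 0)
    {d : ℝ} (hd : klDivR Q P ≤ d) (x : X) : |P x - Q x| ≤ 2 * √d := by
  have h1 : (√(Q x) - √(P x)) ^ 2 ≤ d :=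
    (Finset.single_le_sum (f := fun x => (√(Q x) - √(P x)) ^ 2)
      (fun y _ => sq_nonneg _) (Finset.mem_univ x)).trans ((kl_hell hQ hP h).trans hd)
  have h2 : |√(Q x) - √(P x)| ≤ √d := Real.abs_le_sqrt h1
  have h3 : P x - Q x = -(√(Q x) - √(P x)) * (√(Q x) + √(P x)) := by
    nlinarith [Real.sq_sqrt (hQ.1 x), Real.sq_sqrt (hP.1 x)]
  have h4 : √(Q x) ≤ 1 := Real.sqrt_le_one.mpr (hQ.le_one x)
  have h5 : √(P x) ≤ 1 := Real.sqrt_le_one.mpr (hP.le_one x)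
  rw [h3, abs_mul, abs_neg, abs_of_nonneg (by positivity : 0 ≤ √(Q x) + √(P x))]
  nlinarith [abs_nonneg (√(Q x) - √(P x)), Real.sqrt_nonneg d]

lemma isDist_mix {Q1 Q2 : X → ℝ} (h1 : IsDist Q1) (h2 : IsDist Q2) {α : ℝ} (hα : 0 < α) :
    IsDist (mix Q1 Q2 α) := by
  constructor
  · intro x
    have := h1.1 x
    have := h2.1 x
    unfold mix
    positivity
  · unfold mix
    rw [← Finset.sum_div, Finset.sum_add_distrib, ← Finset.mul_sum, h1.2, h2.2]
    field_simp
    ring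

lemma mix_zero {Q1 Q2 : X → ℝ} (h1 : IsDist Q1) (h2 : IsDist Q2) {α : ℝ} (hα : 0 < α) (x : X)
    (h : mix Q1 Q2 α x = 0) : Q1 x = 0 ∧ Q2 x = 0 := by
  unfold mix at h
  have a := h1.1 x
  have b := h2.1 x
  have : α * Q1 x + Q2 x = 0 := by
    rcases div_eq_zero_iff.mp h with h | h
    · exact h
    · linarith
  have c : 0 ≤ α * Q1 x := by positivity
  have d : α * Q1 x = 0 := by linarith
  exact ⟨by simpa [hα.ne'] using d, by linarith⟩

lemma log_split {q m p : ℝ} (hm : m = 0 → q = 0) (hp : p = 0 → q = 0) :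
    q * Real.log (q / p) = q * Real.log (q / m) + q * Real.log (m / p) := by
  by_cases hq : q = 0
  · simp [hq]
  have hm : m ≠ 0 := fun h => hq (hm h)
  have hp : p ≠ 0 := fun h => hq (hp h)
  rw [Real.log_div hq hp, Real.log_div hq hm, Real.log_div hm hp]
  ring

lemma kl_decomp {Q1 Q2 P1 P2 : X → ℝ} (h1 : IsDist Q1) (h2 : IsDist Q2) {α : ℝ} (hα : 0 < α)
    (hp1 : ∀ x, P1 x = 0 → Q1 x = 0) (hp2 : ∀ x, P2 x = 0 → Q2 x = 0) :
    α * klDivR Q1 P1 + klDivR Q2 P2 = GJS Q1 Q2 α +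
      ∑ x, (α * Q1 x * Real.log (mix Q1 Q2 α x / P1 x) +
        Q2 x * Real.log (mix Q1 Q2 α x / P2 x)) := by
  unfold GJS klDivR
  rw [Finset.mul_sum, Finset.mul_sum, ← Finset.sum_add_distrib, ← Finset.sum_add_distrib,
    ← Finset.sum_add_distrib]
  refine Finset.sum_congr rfl fun x _ => ?_
  rw [log_split (fun h => (mix_zero h1 h2 hα x h).1) (hp1 x),
    log_split (fun h => (mix_zero h1 h2 hα x h).2) (hp2 x)]
  ring

lemma kl_ge_GJS {Q1 Q2 P : X → ℝ} (h1 : IsDist Q1) (h2 : IsDist Q2) (hP : IsDist P)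
    {α : ℝ} (hα : 0 < α)
    (hp1 : ∀ x, P x = 0 → Q1 x = 0) (hp2 : ∀ x, P x = 0 → Q2 x = 0) :
    GJS Q1 Q2 α ≤ α * klDivR Q1 P + klDivR Q2 P := by
  rw [kl_decomp h1 h2 hα hp1 hp2]
  have h := kl_nonneg (isDist_mix h1 h2 hα) hP
    (fun x hx => by simp [mix, hp1 x hx, hp2 x hx])
  have : ∑ x, (α * Q1 x * Real.log (mix Q1 Q2 α x / P x) +
        Q2 x * Real.log (mix Q1 Q2 α x / P x)) = (1 + α) * klDivR (mix Q1 Q2 α) P := by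
    unfold klDivR
    rw [Finset.mul_sum]
    refine Finset.sum_congr rfl fun x _ => ?_
    have : α * Q1 x + Q2 x = (1 + α) * mix Q1 Q2 α x := by
      unfold mix
      field_simp
    rw [← add_mul, this]
    ring
  rw [this]
  have : 0 ≤ (1 + α) * klDivR (mix Q1 Q2 α) P := by positivity
  linarith

lemma tiltZ_pos {α : ℝ} {P1 P2 : X → ℝ} (h1 : IsDist P1)
    (hs1 : FullSupport P1) (hs2 : FullSupport P2) :
    0 < ∑ a, P1 a ^ (α / (1 + α)) * P2 a ^ (1 / (1 + α)) := by
  have : Nonempty X := by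
    by_contra h
    rw [not_nonempty_iff] at h
    have := h1.2
    simp at this
  exact Finset.sum_pos (fun x _ => mul_pos (Real.rpow_pos_of_pos (hs1 x) _)
    (Real.rpow_pos_of_pos (hs2 x) _)) Finset.univ_nonempty

lemma tilt_pos {α : ℝ} {P1 P2 : X → ℝ} (h1 : IsDist P1)
    (hs1 : FullSupport P1) (hs2 : FullSupport P2) (x : X) : 0 < tilt α P1 P2 x :=
  div_pos (mul_pos (Real.rpow_pos_of_pos (hs1 x) _)
    (Real.rpow_pos_of_pos (hs2 x) _)) (tiltZ_pos h1 hs1 hs2)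

lemma isDist_tilt {α : ℝ} {P1 P2 : X → ℝ} (h1 : IsDist P1)
    (hs1 : FullSupport P1) (hs2 : FullSupport P2) : IsDist (tilt α P1 P2) := by
  refine ⟨fun x => (tilt_pos h1 hs1 hs2 x).le, ?_⟩
  unfold tilt
  rw [← Finset.sum_div, div_self (tiltZ_pos h1 hs1 hs2).ne']

lemma renyi_eq {α : ℝ} (hα : 0 < α) (P1 P2 : X → ℝ) :
    renyi (α / (1 + α)) P1 P2 =
      -(1 + α) * Real.log (∑ a, P1 a ^ (α / (1 + α)) * P2 a ^ (1 / (1 + α))) := by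
  unfold renyi
  have e1 : 1 - α / (1 + α) = 1 / (1 + α) := by field_simp; ring
  have e2 : 1 / (α / (1 + α) - 1) = -(1 + α) := by
    have : α / (1 + α) - 1 = -(1 / (1 + α)) := by field_simp; ring
    rw [this]
    field_simp
  rw [e1, e2]

lemma log_tilt {α : ℝ} (hα : 0 < α) {P1 P2 : X → ℝ} (h1 : IsDist P1)
    (hs1 : FullSupport P1) (hs2 : FullSupport P2) (x : X) :
    (1 + α) * Real.log (tilt α P1 P2 x) =
      α * Real.log (P1 x) + Real.log (P2 x) + renyi (α / (1 + α)) P1 P2 := by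
  have a := Real.rpow_pos_of_pos (hs1 x) (α / (1 + α))
  have b := Real.rpow_pos_of_pos (hs2 x) (1 / (1 + α))
  rw [renyi_eq hα]
  unfold tilt
  rw [Real.log_div (mul_pos a b).ne' (tiltZ_pos h1 hs1 hs2).ne', Real.log_mul a.ne' b.ne',
    Real.log_rpow (hs1 x), Real.log_rpow (hs2 x)]
  field_simp
  ring

lemma renyi_nonneg {α : ℝ} (hα : 0 < α) {P1 P2 : X → ℝ} (h1 : IsDist P1) (h2 : IsDist P2)
    (hs1 : FullSupport P1) (hs2 : FullSupport P2) : 0 ≤ renyi (α / (1 + α)) P1 P2 := by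
  rw [renyi_eq hα]
  have : ∑ a, P1 a ^ (α / (1 + α)) * P2 a ^ (1 / (1 + α)) ≤ 1 := by
    calc _ ≤ ∑ a, (α / (1 + α) * P1 a + 1 / (1 + α) * P2 a) :=
          Finset.sum_le_sum fun a _ => Real.geom_mean_le_arith_mean2_weighted (by positivity)
            (by positivity) (hs1 a).le (hs2 a).le (by field_simp; ring)
      _ = 1 := by
        rw [Finset.sum_add_distrib, ← Finset.mul_sum, ← Finset.mul_sum, h1.2, h2.2]
        field_simp
        ring
  have := Real.log_nonpos (tiltZ_pos (α := α) h1 hs1 hs2).le this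
  nlinarith

lemma exists_log_bound (P1 P2 : X → ℝ) :
    ∃ L : ℝ, 0 ≤ L ∧ ∀ x, |Real.log (P1 x)| ≤ L ∧ |Real.log (P2 x)| ≤ L := by
  refine ⟨∑ x, (|Real.log (P1 x)| + |Real.log (P2 x)|), by positivity, fun x => ?_⟩
  have := Finset.single_le_sum (f := fun x => |Real.log (P1 x)| + |Real.log (P2 x)|)
    (fun y _ => by positivity) (Finset.mem_univ x)
  have := abs_nonneg (Real.log (P1 x))
  have := abs_nonneg (Real.log (P2 x))
  constructor <;> linarith

lemma kl_sum_lower {α : ℝ} (hα : 0 < α) {P1 P2 : X → ℝ} (h1 : IsDist P1)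
    (hs1 : FullSupport P1) (hs2 : FullSupport P2) {L : ℝ} (hL0 : 0 ≤ L)
    (hL : ∀ x, |Real.log (P1 x)| ≤ L ∧ |Real.log (P2 x)| ≤ L)
    {Q1 Q2 : X → ℝ} (hQ1 : IsDist Q1) (hQ2 : IsDist Q2) {η : ℝ}
    (hη : GJS Q1 Q2 α ≤ η) :
    renyi (α / (1 + α)) P1 P2 -
      Fintype.card X * (α * (2 * √(η / α) * L) + 2 * √η * L) ≤
      α * klDivR Q1 P1 + klDivR Q2 P2 := by
  have hM := isDist_mix hQ1 hQ2 hα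
  have ac1 := fun x h => (mix_zero hQ1 hQ2 hα x h).1
  have ac2 := fun x h => (mix_zero hQ1 hQ2 hα x h).2
  have k1 := kl_nonneg hQ1 hM ac1
  have k2 := kl_nonneg hQ2 hM ac2
  have g0 : 0 ≤ GJS Q1 Q2 α := by unfold GJS; positivity
  have d1 : klDivR Q1 (mix Q1 Q2 α) ≤ η / α := by
    rw [le_div_iff₀ hα]
    unfold GJS at hη
    linarith
  have d2 : klDivR Q2 (mix Q1 Q2 α) ≤ η := by
    unfold GJS at hη
    nlinarith
  have b1 := abs_sub_le hQ1 hM ac1 d1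
  have b2 := abs_sub_le hQ2 hM ac2 d2
  have hT := kl_nonneg hM (isDist_tilt (α := α) h1 hs1 hs2)
    (fun x h => absurd h (tilt_pos h1 hs1 hs2 x).ne')
  rw [kl_decomp hQ1 hQ2 hα (fun x h => absurd h (hs1 x).ne') (fun x h => absurd h (hs2 x).ne')]
  set M := mix Q1 Q2 α with hMdef
  set R := renyi (α / (1 + α)) P1 P2 with hR
  have key : ∀ x, (1 + α) * (M x * Real.log (M x / tilt α P1 P2 x)) + R * M x
      - (α * (2 * √(η / α) * L) + 2 * √η * L) ≤
      α * Q1 x * Real.log (M x / P1 x) + Q2 x * Real.log (M x / P2 x) := by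
    intro x
    have e : α * Q1 x * Real.log (M x / P1 x) + Q2 x * Real.log (M x / P2 x) =
      (1 + α) * (M x * Real.log (M x / tilt α P1 P2 x)) + R * M x +
        α * ((M x - Q1 x) * Real.log (P1 x)) + (M x - Q2 x) * Real.log (P2 x) := by
      by_cases hx : M x = 0
      · simp [hx, ac1 x hx, ac2 x hx]
      have hmx : (1 + α) * M x = α * Q1 x + Q2 x := by
        rw [hMdef]
        unfold mix
        field_simp
      rw [Real.log_div hx (hs1 x).ne', Real.log_div hx (hs2 x).ne',
        Real.log_div hx (tilt_pos h1 hs1 hs2 x).ne']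
      have := log_tilt hα h1 hs1 hs2 x
      linear_combination (M x) * this - Real.log (M x) * hmx
    have c1 : |(M x - Q1 x) * Real.log (P1 x)| ≤ 2 * √(η / α) * L := by
      rw [abs_mul]
      exact mul_le_mul (b1 x) (hL x).1 (abs_nonneg _) (by positivity)
    have c2 : |(M x - Q2 x) * Real.log (P2 x)| ≤ 2 * √η * L := by
      rw [abs_mul]
      exact mul_le_mul (b2 x) (hL x).2 (abs_nonneg _) (by positivity)
    rw [e]
    have c1' := (abs_le.mp c1).1
    have c2' := (abs_le.mp c2).1
    have := mul_le_mul_of_nonneg_left c1' hα.le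
    linarith
  have s := Finset.sum_le_sum (s := Finset.univ) fun x _ => key x
  rw [Finset.sum_sub_distrib, Finset.sum_add_distrib, ← Finset.mul_sum, ← Finset.mul_sum, hM.2,
    Finset.sum_const, Finset.card_univ, nsmul_eq_mul] at s
  change (1 + α) * klDivR M (tilt α P1 P2) + _ - _ ≤ _ at s
  have : 0 ≤ (1 + α) * klDivR M (tilt α P1 P2) := by positivity
  linarith

open Classical in
lemma beta1_gut {α lam : ℝ} {n : ℕ} {Q1 Q2 : X → ℝ} (h2 : IsDist Q2) :
    beta1 (gutman α lam n) Q1 Q2 = ∑ x : Fin (trainLen α n) → X, ∑ y : Fin n → X,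
      if GJS (empDist x) (empDist y) α ≤ lam then 0 else seqProb Q1 x * seqProb Q1 y := by
  unfold beta1
  refine Finset.sum_congr rfl fun x _ => ?_
  rw [Finset.sum_comm]
  refine Finset.sum_congr rfl fun y _ => ?_
  by_cases h : GJS (empDist x) (empDist y) α ≤ lam
  · simp [gutman, h]
  · simp only [gutman, h, if_true, if_false]
    rw [← Finset.sum_mul, ← Finset.mul_sum, sum_seqProb h2, mul_one]

open Classical in
lemma beta2_gut {α lam : ℝ} {n : ℕ} {P1 P2 : X → ℝ} (h2 : IsDist P2) :
    beta2 (gutman α lam n) P1 P2 = ∑ x : Fin (trainLen α n) → X, ∑ y : Fin n → X,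
      if GJS (empDist x) (empDist y) α ≤ lam then seqProb P1 x * seqProb P2 y else 0 := by
  unfold beta2
  refine Finset.sum_congr rfl fun x _ => ?_
  rw [Finset.sum_comm]
  refine Finset.sum_congr rfl fun y _ => ?_
  by_cases h : GJS (empDist x) (empDist y) α ≤ lam
  · simp only [gutman, h, if_true]
    rw [← Finset.sum_mul, ← Finset.mul_sum, sum_seqProb h2, mul_one]
  · simp [gutman, h]

lemma trainLen_pos {α : ℝ} (hα : 0 < α) {n : ℕ} (hn : 0 < n) : 0 < trainLen α n := by
  unfold trainLen
  exact Nat.ceil_pos.mpr (by positivity)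

lemma le_trainLen (α : ℝ) (n : ℕ) : α * n ≤ trainLen α n := Nat.le_ceil _

lemma trainLen_le {α : ℝ} (hα : 0 < α) (n : ℕ) : (trainLen α n : ℝ) ≤ α * n + 1 :=
  (Nat.ceil_lt_add_one (by positivity)).le

lemma seqProb_pair {α : ℝ} (hα : 0 < α) {n : ℕ} (hn : 0 < n) {Q1 Q2 : X → ℝ}
    (h1 : IsDist Q1) (h2 : IsDist Q2)
    (x : Fin (trainLen α n) → X) (y : Fin n → X)
    (hx : ∀ i, 0 < Q1 (x i)) (hy : ∀ i, 0 < Q2 (y i)) {E : ℝ}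
    (hE : E ≤ α * klDivR (empDist x) Q1 + klDivR (empDist y) Q2) :
    seqProb Q1 x * seqProb Q2 y ≤
      seqProb (empDist x) x * seqProb (empDist y) y * Real.exp (-(n * E)) := by
  have hN := trainLen_pos hα hn
  rw [seqProb_eq_kl hN x hx, seqProb_eq_kl hn y hy]
  have k1 : 0 ≤ klDivR (empDist x) Q1 := by
    refine kl_nonneg (isDist_emp hN x) h1 fun a ha => ?_
    refine emp_eq_zero x a fun i hi => ?_
    have := hx i
    rw [hi, ha] at this
    exact this.false
  have a := seqProb_nonneg (isDist_emp hN x).1 x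
  have b := seqProb_nonneg (isDist_emp hn y).1 y
  have : Real.exp (-(trainLen α n * klDivR (empDist x) Q1)) *
      Real.exp (-(n * klDivR (empDist y) Q2)) ≤ Real.exp (-(n * E)) := by
    rw [← Real.exp_add]
    apply Real.exp_le_exp.mpr
    have l := mul_le_mul_of_nonneg_right (le_trainLen α n) k1
    have := mul_le_mul_of_nonneg_left hE (Nat.cast_nonneg (α := ℝ) n)
    nlinarith
  calc _ = seqProb (empDist x) x * seqProb (empDist y) y *
        (Real.exp (-(trainLen α n * klDivR (empDist x) Q1)) *
      Real.exp (-(n * klDivR (empDist y) Q2))) := by ring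
    _ ≤ _ := mul_le_mul_of_nonneg_left this (mul_nonneg a b)

/-- polynomial factor -/
noncomputable def polyF (k : ℕ) (α : ℝ) (n : ℕ) : ℝ :=
  ((trainLen α n : ℝ) + 1) ^ k * ((n : ℝ) + 1) ^ k

lemma sum_pair_le {α : ℝ} (hα : 0 < α) {n : ℕ} (hn : 0 < n)
    (f : (Fin (trainLen α n) → X) → (Fin n → X) → ℝ) {E : ℝ}
    (hf : ∀ x y, f x y ≤ seqProb (empDist x) x * seqProb (empDist y) y * Real.exp (-(n * E))) :
    ∑ x, ∑ y, f x y ≤ polyF (Fintype.card X) α n * Real.exp (-(n * E)) := by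
  calc _ ≤ ∑ x : Fin (trainLen α n) → X, ∑ y : Fin n → X,
          seqProb (empDist x) x * seqProb (empDist y) y * Real.exp (-(n * E)) :=
        Finset.sum_le_sum fun x _ => Finset.sum_le_sum fun y _ => hf x y
    _ = (∑ x : Fin (trainLen α n) → X, seqProb (empDist x) x) *
          (∑ y : Fin n → X, seqProb (empDist y) y) * Real.exp (-(n * E)) := by
        rw [Finset.sum_mul_sum, Finset.sum_mul]
        refine Finset.sum_congr rfl fun x _ => ?_
        rw [Finset.sum_mul]
    _ ≤ _ := by
        unfold polyF
        refine mul_le_mul_of_nonneg_right ?_ (Real.exp_pos _).le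
        refine mul_le_mul (sum_seqProb_emp_le (trainLen_pos hα hn)) (sum_seqProb_emp_le hn) ?_
          (by positivity)
        exact Finset.sum_nonneg fun y _ => seqProb_nonneg (isDist_emp hn y).1 y

lemma beta1_le {α : ℝ} (hα : 0 < α) {n : ℕ} (hn : 0 < n) {η : ℝ} {Q1 Q2 : X → ℝ}
    (h1 : IsDist Q1) (h2 : IsDist Q2) :
    beta1 (gutman α η n) Q1 Q2 ≤ polyF (Fintype.card X) α n * Real.exp (-(n * η)) := by
  rw [beta1_gut h2]
  refine sum_pair_le hα hn _ fun x y => ?_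
  have hN := trainLen_pos hα hn
  have z : 0 ≤ seqProb (empDist x) x * seqProb (empDist y) y * Real.exp (-(n * η)) :=
    mul_nonneg (mul_nonneg (seqProb_nonneg (isDist_emp hN x).1 x)
      (seqProb_nonneg (isDist_emp hn y).1 y)) (Real.exp_pos _).le
  split_ifs with h
  · exact z
  by_cases hx : ∃ i, Q1 (x i) = 0
  · obtain ⟨i, hi⟩ := hx
    have : seqProb Q1 x = 0 := Finset.prod_eq_zero (Finset.mem_univ i) hi
    simpa [this] using z
  by_cases hy : ∃ i, Q1 (y i) = 0
  · obtain ⟨i, hi⟩ := hy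
    have : seqProb Q1 y = 0 := Finset.prod_eq_zero (Finset.mem_univ i) hi
    simpa [this] using z
  push Not at hx hy h
  refine seqProb_pair hα hn h1 h1 x y (fun i => lt_of_le_of_ne (h1.1 _) (hx i).symm)
    (fun i => lt_of_le_of_ne (h1.1 _) (hy i).symm) (h.le.trans ?_)
  refine kl_ge_GJS (isDist_emp hN x) (isDist_emp hn y) h1 hα ?_ ?_
  · exact fun a ha => emp_eq_zero x a fun i hi => hx i (hi ▸ ha)
  · exact fun a ha => emp_eq_zero y a fun i hi => hy i (hi ▸ ha)

lemma beta2_le {α : ℝ} (hα : 0 < α) {n : ℕ} (hn : 0 < n) {η E : ℝ} {P1 P2 : X → ℝ}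
    (h1 : IsDist P1) (h2 : IsDist P2) (hs1 : FullSupport P1) (hs2 : FullSupport P2)
    (hE : ∀ Q1 Q2 : X → ℝ, IsDist Q1 → IsDist Q2 → GJS Q1 Q2 α ≤ η →
      E ≤ α * klDivR Q1 P1 + klDivR Q2 P2) :
    beta2 (gutman α η n) P1 P2 ≤ polyF (Fintype.card X) α n * Real.exp (-(n * E)) := by
  rw [beta2_gut h2]
  refine sum_pair_le hα hn _ fun x y => ?_
  have hN := trainLen_pos hα hn
  have z : 0 ≤ seqProb (empDist x) x * seqProb (empDist y) y * Real.exp (-(n * E)) :=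
    mul_nonneg (mul_nonneg (seqProb_nonneg (isDist_emp hN x).1 x)
      (seqProb_nonneg (isDist_emp hn y).1 y)) (Real.exp_pos _).le
  split_ifs with h
  · exact seqProb_pair hα hn h1 h2 x y (fun i => hs1 _) (fun i => hs2 _)
      (hE _ _ (isDist_emp hN x) (isDist_emp hn y) h)
  · exact z

lemma tendsto_polyF {α : ℝ} (hα : 0 < α) (k : ℕ) {c : ℝ} (hc : 0 < c) :
    Tendsto (fun n : ℕ => polyF k α n * Real.exp (-(n * c))) atTop (𝓝 0) := by
  have t1 := Real.tendsto_pow_mul_exp_neg_atTop_nhds_zero (2 * k)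
  have t2 : Tendsto (fun n : ℕ => c * ((n : ℝ) + 1)) atTop atTop :=
    Tendsto.const_mul_atTop hc
      (tendsto_atTop_add_const_right _ _ tendsto_natCast_atTop_atTop)
  have t3 := (t1.comp t2).const_mul ((α + 2) ^ k * (c⁻¹) ^ (2 * k) * Real.exp c)
  rw [mul_zero] at t3
  refine squeeze_zero (fun n => by unfold polyF; positivity) (fun n => ?_) t3
  have e : (α + 2) ^ k * (c⁻¹) ^ (2 * k) * Real.exp c *
      ((c * ((n : ℝ) + 1)) ^ (2 * k) * Real.exp (-(c * ((n : ℝ) + 1)))) =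
      ((α + 2) * (n + 1)) ^ k * (n + 1) ^ k * Real.exp (-(n * c)) := by
    have e1 : Real.exp (-(c * ((n : ℝ) + 1))) = Real.exp (-(n * c)) * (Real.exp c)⁻¹ := by
      rw [← Real.exp_neg, ← Real.exp_add]
      congr 1
      ring
    have := Real.exp_pos c
    rw [e1, mul_pow, mul_pow, inv_pow]
    field_simp
    ring
  simp only [Function.comp]
  rw [e]
  unfold polyF
  refine mul_le_mul_of_nonneg_right (mul_le_mul_of_nonneg_right ?_ (by positivity))
    (Real.exp_pos _).le
  refine pow_le_pow_left₀ (by positivity) ?_ k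
  have := trainLen_le hα n
  nlinarith [Nat.cast_nonneg (α := ℝ) n]

lemma exists_eta {α : ℝ} (hα : 0 < α) (L K : ℝ) {δ : ℝ} (hδ : 0 < δ) :
    ∃ η : ℝ, 0 < η ∧ K * (α * (2 * √(η / α) * L) + 2 * √η * L) < δ := by
  have hc : Continuous fun η : ℝ => K * (α * (2 * √(η / α) * L) + 2 * √η * L) := by fun_prop
  have h0 : Tendsto (fun η : ℝ => K * (α * (2 * √(η / α) * L) + 2 * √η * L)) (𝓝[>] 0) (𝓝 0) := by
    have := hc.tendsto 0
    simp only [zero_div, Real.sqrt_zero, mul_zero, zero_mul, add_zero] at this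
    exact this.mono_left nhdsWithin_le_nhds
  obtain ⟨η, h1, h2⟩ := ((h0.eventually (gt_mem_nhds hδ)).and self_mem_nhdsWithin).exists
  exact ⟨η, h2, h1⟩

lemma achiev {α ε : ℝ} (hα : 0 < α) (hε : 0 < ε)
    {P1 P2 : X → ℝ} (h1 : IsDist P1) (h2 : IsDist P2)
    (hs1 : FullSupport P1) (hs2 : FullSupport P2) {δ : ℝ} (hδ : 0 < δ) :
    ∀ᶠ n : ℕ in atTop, ∃ lam : ℝ, 0 ≤ lam ∧
      (∀ Q1 Q2 : X → ℝ, IsDist Q1 → IsDist Q2 → beta1 (gutman α lam n) Q1 Q2 ≤ ε) ∧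
      beta2 (gutman α lam n) P1 P2 ≤
        Real.exp (-((n : ℝ) * (renyi (α / (1 + α)) P1 P2 - δ))) := by
  obtain ⟨L, hL0, hL⟩ := exists_log_bound P1 P2
  obtain ⟨η, hη, hη'⟩ := exists_eta hα L (Fintype.card X) (half_pos hδ)
  filter_upwards [(tendsto_polyF hα (Fintype.card X) hη).eventually (gt_mem_nhds hε),
    (tendsto_polyF hα (Fintype.card X) (half_pos hδ)).eventually (gt_mem_nhds one_pos),
    eventually_gt_atTop 0] with n a1 a2 hn
  refine ⟨η, hη.le, fun Q1 Q2 hQ1 hQ2 => (beta1_le hα hn hQ1 hQ2).trans a1.le, ?_⟩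
  refine (beta2_le hα hn (E := renyi (α / (1 + α)) P1 P2 - δ / 2) h1 h2 hs1 hs2
    fun Q1 Q2 hQ1 hQ2 hg => ?_).trans ?_
  · have := kl_sum_lower hα h1 hs1 hs2 hL0 hL hQ1 hQ2 hg
    linarith
  · have e : Real.exp (-((n : ℝ) * (renyi (α / (1 + α)) P1 P2 - δ / 2))) =
        Real.exp (-(n * (δ / 2))) *
        Real.exp (-((n : ℝ) * (renyi (α / (1 + α)) P1 P2 - δ))) := by
      rw [← Real.exp_add]
      congr 1
      ring
    rw [e, ← mul_assoc]
    exact mul_le_of_le_one_left (Real.exp_pos _).le a2.le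

lemma mgf_le {q : X → ℝ} (hq : IsDist q) {f : X → ℝ} {L : ℝ} (hf : ∀ x, |f x| ≤ L) {s : ℝ}
    (hs : 0 ≤ s) (hsL : s * L ≤ 1) :
    ∑ x, q x * Real.exp (s * f x) ≤ Real.exp (s * ∑ x, q x * f x + s ^ 2 * L ^ 2) := by
  refine le_trans ?_ (Real.add_one_le_exp _)
  calc _ ≤ ∑ x, (q x + s * (q x * f x) + q x * (s ^ 2 * L ^ 2)) := by
        refine Finset.sum_le_sum fun x _ => ?_
        have h1 : |s * f x| ≤ s * L := by
          rw [abs_mul, abs_of_nonneg hs]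
          exact mul_le_mul_of_nonneg_left (hf x) hs
        have h2 := (abs_le.mp (Real.abs_exp_sub_one_sub_id_le (h1.trans hsL))).2
        have h3 : (s * f x) ^ 2 ≤ (s * L) ^ 2 := by
          rw [← sq_abs]
          exact pow_le_pow_left₀ (abs_nonneg _) h1 2
        have h4 : Real.exp (s * f x) ≤ 1 + s * f x + s ^ 2 * L ^ 2 := by nlinarith
        have := mul_le_mul_of_nonneg_left h4 (hq.1 x)
        linarith
    _ = _ := by
        rw [Finset.sum_add_distrib, Finset.sum_add_distrib, ← Finset.mul_sum, ← Finset.sum_mul,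
          hq.2]
        ring

lemma sum_seqProb_exp (q f : X → ℝ) (s : ℝ) (m : ℕ) :
    ∑ x : Fin m → X, seqProb q x * Real.exp (s * ∑ i, f (x i)) =
      (∑ a, q a * Real.exp (s * f a)) ^ m := by
  rw [Fintype.sum_pow]
  refine Finset.sum_congr rfl fun x _ => ?_
  unfold seqProb
  rw [Finset.mul_sum, Real.exp_sum, Finset.prod_mul_distrib]

lemma seqProb_ratio {P q : X → ℝ} (hP : FullSupport P) (hq : FullSupport q) {m : ℕ}
    (x : Fin m → X) :
    seqProb q x = seqProb P x * Real.exp (∑ i, Real.log (q (x i) / P (x i))) := by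
  unfold seqProb
  rw [Real.exp_sum, ← Finset.prod_mul_distrib]
  refine Finset.prod_congr rfl fun i _ => ?_
  have a := hP (x i)
  rw [Real.exp_log (div_pos (hq _) a)]
  field_simp

lemma chernoff {α : ℝ} (hα : 0 < α) {P1 P2 : X → ℝ} (h1 : IsDist P1)
    (hs1 : FullSupport P1) (hs2 : FullSupport P2) {δ : ℝ} (hδ : 0 < δ) :
    ∃ s c C : ℝ, 0 < s ∧ 0 < c ∧ ∀ n : ℕ,
      ∑ x : Fin (trainLen α n) → X, ∑ y : Fin n → X,
        seqProb (tilt α P1 P2) x * seqProb (tilt α P1 P2) y *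
        Real.exp (s * (∑ i, Real.log (tilt α P1 P2 (x i) / P1 (x i)) +
          ∑ i, Real.log (tilt α P1 P2 (y i) / P2 (y i)) -
            n * (renyi (α / (1 + α)) P1 P2 + δ))) ≤ Real.exp (C - c * n) := by
  have hq := isDist_tilt (α := α) h1 hs1 hs2
  have hqp := tilt_pos (α := α) h1 hs1 hs2
  have hlt := log_tilt hα h1 hs1 hs2
  set q := tilt α P1 P2
  set R := renyi (α / (1 + α)) P1 P2
  obtain ⟨L0, hL0, hL⟩ := exists_log_bound (fun x => q x / P1 x) (fun x => q x / P2 x)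
  set L := L0 + 1 with hLdef
  have hLp : 0 < L := by positivity
  set D1 := ∑ x, q x * Real.log (q x / P1 x) with hD1
  set D2 := ∑ x, q x * Real.log (q x / P2 x) with hD2
  have hD : α * D1 + D2 = R := by
    rw [hD1, hD2, Finset.mul_sum, ← Finset.sum_add_distrib]
    have : ∀ x, α * (q x * Real.log (q x / P1 x)) + q x * Real.log (q x / P2 x) = q x * R := by
      intro x
      rw [Real.log_div (hqp x).ne' (hs1 x).ne', Real.log_div (hqp x).ne' (hs2 x).ne']
      linear_combination q x * hlt x
    rw [Finset.sum_congr rfl fun x _ => this x, ← Finset.sum_mul, hq.2, one_mul]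
  have hD1n : 0 ≤ D1 := kl_nonneg hq h1 fun x h => absurd h (hs1 x).ne'
  set s := min (1 / L) (δ / (2 * L ^ 2 * (1 + α))) with hs
  have hsp : 0 < s := lt_min (by positivity) (by positivity)
  have hsL : s * L ≤ 1 := by
    have : s ≤ 1 / L := min_le_left _ _
    rwa [le_div_iff₀ hLp] at this
  have hsd : s * (2 * L ^ 2 * (1 + α)) ≤ δ := by
    have : s ≤ δ / (2 * L ^ 2 * (1 + α)) := min_le_right _ _
    rwa [le_div_iff₀ (by positivity)] at this
  refine ⟨s, s * δ / 2, s * D1 + s ^ 2 * L ^ 2, hsp, by positivity, fun n => ?_⟩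
  have m1 := mgf_le hq (f := fun x => Real.log (q x / P1 x)) (L := L)
    (fun x => (hL x).1.trans (by linarith)) hsp.le hsL
  have m2 := mgf_le hq (f := fun x => Real.log (q x / P2 x)) (L := L)
    (fun x => (hL x).2.trans (by linarith)) hsp.le hsL
  have e : ∑ x : Fin (trainLen α n) → X, ∑ y : Fin n → X, seqProb q x * seqProb q y *
        Real.exp (s * (∑ i, Real.log (q (x i) / P1 (x i)) +
          ∑ i, Real.log (q (y i) / P2 (y i)) - n * (R + δ))) =
      (∑ a, q a * Real.exp (s * Real.log (q a / P1 a))) ^ (trainLen α n) *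
      (∑ a, q a * Real.exp (s * Real.log (q a / P2 a))) ^ n * Real.exp (-(s * (n * (R + δ)))) := by
    rw [← sum_seqProb_exp q (fun a => Real.log (q a / P1 a)),
      ← sum_seqProb_exp q (fun a => Real.log (q a / P2 a)), Finset.sum_mul_sum, Finset.sum_mul]
    refine Finset.sum_congr rfl fun x _ => ?_
    rw [Finset.sum_mul]
    refine Finset.sum_congr rfl fun y _ => ?_
    rw [mul_sub, mul_add, sub_eq_add_neg, Real.exp_add, Real.exp_add]
    ring
  rw [e]
  have n1 : 0 ≤ ∑ a, q a * Real.exp (s * Real.log (q a / P1 a)) :=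
    Finset.sum_nonneg fun a _ => mul_nonneg (hq.1 a) (Real.exp_pos _).le
  have n2 : 0 ≤ ∑ a, q a * Real.exp (s * Real.log (q a / P2 a)) :=
    Finset.sum_nonneg fun a _ => mul_nonneg (hq.1 a) (Real.exp_pos _).le
  calc _ ≤ Real.exp (s * D1 + s ^ 2 * L ^ 2) ^ (trainLen α n) *
          Real.exp (s * D2 + s ^ 2 * L ^ 2) ^ n * Real.exp (-(s * (n * (R + δ)))) := by
        refine mul_le_mul_of_nonneg_right ?_ (Real.exp_pos _).le
        exact mul_le_mul (pow_le_pow_left₀ n1 m1 _) (pow_le_pow_left₀ n2 m2 _) (by positivity)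
          (by positivity)
    _ ≤ _ := by
        rw [← Real.exp_nat_mul, ← Real.exp_nat_mul, ← Real.exp_add, ← Real.exp_add]
        apply Real.exp_le_exp.mpr
        have t := mul_le_mul_of_nonneg_right (trainLen_le hα n)
          (show 0 ≤ s * D1 + s ^ 2 * L ^ 2 by positivity)
        have u := mul_le_mul_of_nonneg_left hsd
          (show 0 ≤ s * (n : ℝ) / 2 by positivity)
        have v : (s * n) * (α * D1 + D2) = (s * n) * R := by rw [hD]
        linarith

lemma converse_s5 {α ε : ℝ} (hα : 0 < α) (hε : ε < 1)
    {P1 P2 : X → ℝ} (h1 : IsDist P1) (h2 : IsDist P2)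
    (hs1 : FullSupport P1) (hs2 : FullSupport P2) {δ : ℝ} (hδ : 0 < δ) :
    ∀ᶠ n : ℕ in atTop, ∀ τ lam : ℝ,
      (∀ Q1 Q2 : X → ℝ, IsDist Q1 → IsDist Q2 → beta1 (gutman α lam n) Q1 Q2 ≤ ε) →
      beta2 (gutman α lam n) P1 P2 ≤ Real.exp (-((n : ℝ) * τ)) →
      τ ≤ renyi (α / (1 + α)) P1 P2 + δ := by
  obtain ⟨s, c, C, hs, hc, H⟩ := chernoff hα h1 hs1 hs2 (half_pos hδ)
  have hq := isDist_tilt (α := α) h1 hs1 hs2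
  have hqp : FullSupport (tilt α P1 P2) := tilt_pos (α := α) h1 hs1 hs2
  set q := tilt α P1 P2
  set R := renyi (α / (1 + α)) P1 P2
  have hcast : Tendsto (fun n : ℕ => (n : ℝ)) atTop atTop := tendsto_natCast_atTop_atTop
  have t1 : Tendsto (fun n : ℕ => Real.exp (C - c * n)) atTop (𝓝 0) := by
    refine Real.tendsto_exp_atBot.comp ?_
    simp only [sub_eq_add_neg]
    exact tendsto_atBot_add_const_left _ _
      (tendsto_neg_atTop_atBot.comp (hcast.const_mul_atTop hc))
  have t2 : Tendsto (fun n : ℕ => Real.exp (-(δ / 2 * n))) atTop (𝓝 0) :=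
    Real.tendsto_exp_atBot.comp
      (tendsto_neg_atTop_atBot.comp (hcast.const_mul_atTop (half_pos hδ)))
  have hg : 0 < (1 - ε) / 2 := by linarith
  filter_upwards [t1.eventually (gt_mem_nhds hg), t2.eventually (gt_mem_nhds hg),
    eventually_gt_atTop 0] with n a1 a2 hn τ lam hb1 hb2
  have b1 := hb1 q q hq hq
  rw [beta1_gut hq] at b1
  rw [beta2_gut h2] at hb2
  have key : 1 ≤ ε + Real.exp (n * (R + δ / 2)) * Real.exp (-((n : ℝ) * τ)) +
      Real.exp (C - c * n) := by
    refine le_trans ?_ (add_le_add (add_le_add b1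
      (mul_le_mul_of_nonneg_left hb2 (Real.exp_pos _).le)) (H n))
    have one : (1 : ℝ) = ∑ x : Fin (trainLen α n) → X, ∑ y : Fin n → X,
        seqProb q x * seqProb q y := by
      rw [← Finset.sum_mul_sum, sum_seqProb hq, sum_seqProb hq, one_mul]
    rw [one, Finset.mul_sum, ← Finset.sum_add_distrib, ← Finset.sum_add_distrib]
    refine Finset.sum_le_sum fun x _ => ?_
    rw [Finset.mul_sum, ← Finset.sum_add_distrib, ← Finset.sum_add_distrib]
    refine Finset.sum_le_sum fun y _ => ?_
    have z1 := seqProb_nonneg hq.1 x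
    have z2 := seqProb_nonneg hq.1 y
    have z3 := seqProb_nonneg h1.1 x
    have z4 := seqProb_nonneg h2.1 y
    split_ifs with h
    · rw [zero_add]
      set S1 := ∑ i, Real.log (q (x i) / P1 (x i)) with hS1
      set S2 := ∑ i, Real.log (q (y i) / P2 (y i)) with hS2
      have zz := mul_nonneg z1 z2
      by_cases hS : S1 + S2 ≤ n * (R + δ / 2)
      · have r : seqProb q x * seqProb q y =
            Real.exp (S1 + S2) * (seqProb P1 x * seqProb P2 y) := by
          rw [seqProb_ratio hs1 hqp x, seqProb_ratio hs2 hqp y, Real.exp_add]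
          ring
        have u : seqProb q x * seqProb q y ≤
            Real.exp (n * (R + δ / 2)) * (seqProb P1 x * seqProb P2 y) := by
          rw [r]
          exact mul_le_mul_of_nonneg_right (Real.exp_le_exp.mpr hS) (mul_nonneg z3 z4)
        have v := mul_nonneg zz (Real.exp_pos (s * (S1 + S2 - n * (R + δ / 2)))).le
        linarith
      · push Not at hS
        have w : 1 ≤ Real.exp (s * (S1 + S2 - n * (R + δ / 2))) :=
          Real.one_le_exp (mul_nonneg hs.le (by linarith))
        have u := mul_le_mul_of_nonneg_left w zz
        have v := mul_nonneg (Real.exp_pos (n * (R + δ / 2))).le (mul_nonneg z3 z4)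
        linarith
    · have v := mul_nonneg (mul_nonneg z1 z2) (Real.exp_pos (s * (∑ i, Real.log (q (x i) / P1 (x i)) +
          ∑ i, Real.log (q (y i) / P2 (y i)) - n * (R + δ / 2)))).le
      linarith
  by_contra hτ
  push Not at hτ
  have hn' : (0 : ℝ) < n := by exact_mod_cast hn
  have : Real.exp (n * (R + δ / 2)) * Real.exp (-((n : ℝ) * τ)) ≤ Real.exp (-(δ / 2 * n)) := by
    rw [← Real.exp_add]
    apply Real.exp_le_exp.mpr
    nlinarith
  linarith

/-- Proposition 1 of the paper: Gutman's test in the dual setting: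
`τ*(n,α,ε|φ_n^Gut,P1,P2) → D_{α/(1+α)}(P1‖P2)` as `n → ∞`. -/
theorem tauStarGut_limit {X : Type*} [Fintype X] [DecidableEq X]
    (α ε : ℝ) (hα : 0 < α) (hε : ε ∈ Set.Ioo (0 : ℝ) 1)
    (P1 P2 : X → ℝ) (h1 : IsDist P1) (h2 : IsDist P2)
    (hs1 : FullSupport P1) (hs2 : FullSupport P2) :
    Filter.Tendsto (fun n : ℕ => tauStarGut α n ε P1 P2) Filter.atTop
      (nhds (renyi (α / (1 + α)) P1 P2)) := by
  rw [Metric.tendsto_atTop']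
  have hR := renyi_nonneg hα h1 h2 hs1 hs2
  intro δ hδ
  have ev := (achiev hα hε.1 h1 h2 hs1 hs2 (half_pos hδ)).and
    (converse_s5 hα hε.2 h1 h2 hs1 hs2 (half_pos hδ))
  obtain ⟨n0, hn0⟩ := eventually_atTop.mp ev
  refine ⟨n0, fun n hn => ?_⟩
  obtain ⟨⟨lam, hl, hb1, hb2⟩, hc⟩ := hn0 n hn.le
  have up : ∀ τ ∈ {τ : ℝ | 0 ≤ τ ∧ ∃ lam : ℝ, 0 ≤ lam ∧
      (∀ Q1 Q2 : X → ℝ, IsDist Q1 → IsDist Q2 →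
        beta1 (gutman α lam n) Q1 Q2 ≤ ε) ∧
      beta2 (gutman α lam n) P1 P2 ≤ Real.exp (-((n : ℝ) * τ))},
      τ ≤ renyi (α / (1 + α)) P1 P2 + δ / 2 := by
    rintro τ ⟨_, lam, _, c1, c2⟩
    exact hc τ lam c1 c2
  have hle : tauStarGut α n ε P1 P2 ≤ renyi (α / (1 + α)) P1 P2 + δ / 2 :=
    Real.sSup_le up (by linarith)
  have hge : renyi (α / (1 + α)) P1 P2 - δ / 2 ≤ tauStarGut α n ε P1 P2 := by
    by_cases h : 0 ≤ renyi (α / (1 + α)) P1 P2 - δ / 2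
    · exact le_csSup ⟨_, up⟩ ⟨h, lam, hl, hb1, hb2⟩
    · push Not at h
      exact h.le.trans (Real.sSup_nonneg fun τ hτ => hτ.1)
  rw [Real.dist_eq, abs_lt]
  constructor <;> linarith

end Classification
end
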